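/- arXiv:1308.1804 — 2 statements merged into one kernel-verified Lean document; each statement's English description precedes it below -/
import Mathlib

section
/- Let G be a Grothendieck category and T an object of G. Then T is a tilting object (i.e., there is a ring R and a triangle equivalence from the unbounded derived category D(G) to D(R) sending T to R) if and only if the following three conditions hold: (T1) T is a compact object of D(G); (T2) Ext^i_G(T,T) = 0 for every i > 0; (T3) T generates D(G), i.e., for every nonzero object X of D(G) there exists i ∈ ℤ with Hom_{D(G)}(Σ^i T, X) ≠ 0. In that case R ≅ End_G(T), and for R = End_G(T) the total right derived functor RHom_G(T,−) : D(G) → D(R) is a triangle equivalence sending T to R. -/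
/-!
Statement 0: For a Grothendieck category `G` and `T : G`, `T` is tilting (there is a ring `R`
and a triangle equivalence `D(G) ≌ D(Mod-R)` sending `T` to `R`) iff `T` is compact in `D(G)`,
rigid, and generates `D(G)`.  In that case `R ≅ End_G(T)` and there is a triangle equivalence
`D(G) ≌ D(Mod-End_G(T))` sending `T` to the regular module.
(Right `R`-modules are formalized as `ModuleCat R`, whence the `ᵐᵒᵖ` on endomorphism rings.)
-/

universe w w' v u

open CategoryTheory Category Limits Pretriangulated

namespace PaperStmt

variable {T : Type u} [Category.{v} T]

/-- An object `Z` of a preadditive category is compact if for every small family `(X i)`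
having a coproduct, the canonical map `⨁ᵢ Hom(Z, X i) → Hom(Z, ∐ X)` is bijective. -/
def IsCompactObj [Preadditive T] (Z : T) : Prop :=
  ∀ ⦃ι : Type v⦄ (X : ι → T) [HasCoproduct X],
    letI := Classical.decEq ι
    Function.Bijective
      (DFinsupp.sumAddHom (β := fun i => (Z ⟶ X i))
        (fun i => Preadditive.rightComp Z (Sigma.ι X i)))

/-- `Z` is a generator of a triangulated category in the triangulated sense:
every nonzero object receives a nonzero morphism from some shift of `Z`. -/
def IsTriangulatedGen [Preadditive T] [HasShift T ℤ] (Z : T) : Prop :=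
  ∀ (X : T), ¬ IsZero X → ∃ (i : ℤ) (f : Z⟦i⟧ ⟶ X), f ≠ 0

/-- A triangle equivalence: an equivalence of categories commuting with the shift and
preserving distinguished triangles. -/
structure TriangleEquivalenceData (D₁ : Type u) (D₂ : Type w)
    [Category.{v} D₁] [Category.{w'} D₂]
    [HasZeroObject D₁] [HasZeroObject D₂] [Preadditive D₁] [Preadditive D₂]
    [HasShift D₁ ℤ] [HasShift D₂ ℤ]
    [∀ n : ℤ, (shiftFunctor D₁ n).Additive] [∀ n : ℤ, (shiftFunctor D₂ n).Additive]
    [Pretriangulated D₁] [Pretriangulated D₂] where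
  functor : D₁ ⥤ D₂
  commShift : functor.CommShift ℤ
  isTriangulated : letI := commShift; functor.IsTriangulated
  isEquivalence : functor.IsEquivalence

variable (G : Type u) [Category.{v} G] [Abelian G] [HasDerivedCategory.{w} G]

/-- `T` is a tilting object of `G`: there is a ring `R` and a triangle equivalence
`D(G) ≌ D(Mod-R)` sending `T` to `R`. -/
def IsTiltingObject (Tt : G) : Prop :=
  ∃ (R : Type v) (_ : Ring R),
    letI : HasDerivedCategory (ModuleCat.{v} R) := HasDerivedCategory.standard _
    ∃ E : TriangleEquivalenceData (DerivedCategory G) (DerivedCategory (ModuleCat.{v} R)),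
      Nonempty (E.functor.obj ((DerivedCategory.singleFunctor G 0).obj Tt)
        ≅ (DerivedCategory.singleFunctor (ModuleCat.{v} R) 0).obj (ModuleCat.of R R))

end PaperStmt

open PaperStmt DerivedCategory

/-!
Let `R = (End T)ᵐᵒᵖ`, so that `ModuleCat R` is the category of right `End T`-modules, and let
`Loc R` be the localizing subcategory of `K(ModuleCat R)` generated by the stalk complex `R`. A
coproduct preserving triangulated functor which is bijective on `Hom(R, R[n])` for all `n` and
sends `R` to a compact generator restricts to an equivalence on `Loc R`: dévissage gives full
faithfulness, and a homotopy colimit argument shows that the compact generator generates its target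
as a localizing subcategory, whence essential surjectivity. This applies to the localization
`K(ModuleCat R) ⥤ D(ModuleCat R)`, because `R` is projective, and, if `T` is compact, rigid and a
generator, to `- ⊗ T` followed by the localization `K(G) ⥤ D(G)`; no deriving of `- ⊗ T` is needed.
Hence `D(G)` and `D(ModuleCat R)` are both equivalent to `Loc R`, with `T` and `R` corresponding.

Conversely, a triangle equivalence reflects compactness, rigidity and generation, which `R` has,
and identifies the endomorphism rings of `T` and `R`.

Coproducts in `D(G)` are indexed by the universe of `G`, whereas `IsCompactObj` uses the universe
of the morphisms of `D(G)`. For `T` the two notions agree: distinct summands of a coproduct of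
copies of `T ≠ 0` have distinct projections to `T`, and, when `T` generates, distinct nonzero
summands of any coproduct receive distinct morphisms from shifts of `T`, which bounds the index
types.
-/

namespace Tilting

universe t t' v₁ u₁ v₂ u₂ v₃ u₃

section Coproducts

variable {C : Type u₁} [Category.{v₁} C]

lemma nonempty_isColimit_cofan_iff {J : Type t} {X : J → C} (c : Cofan X) :
    Nonempty (IsColimit c) ↔
      ∀ (W : C) (f : ∀ j, X j ⟶ W), ∃! u : c.pt ⟶ W, ∀ j, c.inj j ≫ u = f j := by
  refine ⟨fun ⟨hc⟩ W f ↦ ⟨Cofan.IsColimit.desc hc f, by simp, fun u hu ↦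
    Cofan.IsColimit.hom_ext hc _ _ (by simpa using hu)⟩, fun h ↦ ?_⟩
  choose desc fac uniq using h
  exact ⟨Cofan.IsColimit.mk _ (fun s ↦ desc s.pt s.inj) (fun s ↦ fac s.pt s.inj)
    (fun s ↦ uniq s.pt s.inj)⟩

variable [Preadditive C]

lemma exists_proj_of_isColimit {J : Type t} {X : J → C} {c : Cofan X} (hc : IsColimit c) (j : J) :
    ∃ p : c.pt ⟶ X j, c.inj j ≫ p = 𝟙 (X j) ∧ ∀ i, i ≠ j → c.inj i ≫ p = 0 := by
  classical
  exact ⟨Cofan.IsColimit.desc hc (Pi.single (M := fun i ↦ X i ⟶ X j) j (𝟙 (X j))), by simp,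
    fun i hi ↦ by simp [hi]⟩

/-- `Z` is compact with respect to coproducts indexed by types in `Type t`: every morphism from
`Z` to such a coproduct is a finite sum of morphisms through the summands. Injectivity of
`⨁ Hom(Z, X j) → Hom(Z, ∐ X)` is automatic in a preadditive category, so only surjectivity is
recorded. Unlike in `IsCompactObj`, the universe of the index types is free. -/
def IsCompactObject (Z : C) : Prop :=
  ∀ (J : Type t) (X : J → C) (c : Cofan X), IsColimit c → ∀ f : Z ⟶ c.pt,
    ∃ (s : Finset J) (g : ∀ j, Z ⟶ X j), f = ∑ j ∈ s, g j ≫ c.inj j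

namespace IsCompactObject

variable {D : Type u₂} [Category.{v₂} D] [Preadditive D]

lemma of_adjunction {F : C ⥤ D} {G : D ⥤ C} [F.Additive] (adj : F ⊣ G)
    [∀ J : Type t, PreservesColimitsOfShape (Discrete J) G] {Z : C}
    (hZ : IsCompactObject.{t} Z) : IsCompactObject.{t} (F.obj Z) := by
  intro J X c hc f
  obtain ⟨s, g, hg⟩ := hZ J _ _
    (Cofan.isColimitMapCoconeEquiv G X c (isColimitOfPreserves G hc)) (adj.homEquiv _ _ f)
  refine ⟨s, fun j ↦ (adj.homEquiv _ _).symm (g j), (adj.homEquiv _ _).injective ?_⟩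
  rw [hg, ← Equiv.symm_apply_eq]
  simp [Adjunction.homEquiv_counit, Preadditive.sum_comp]

lemma map_equivalence (F : C ⥤ D) [F.IsEquivalence] [F.Additive] {Z : C}
    (hZ : IsCompactObject.{t} Z) : IsCompactObject.{t} (F.obj Z) :=
  of_adjunction (F := F) F.asEquivalence.toAdjunction hZ

lemma of_iso {Z Z' : C} (e : Z ≅ Z') (hZ : IsCompactObject.{t} Z) : IsCompactObject.{t} Z' := by
  intro J X c hc f
  obtain ⟨s, g, hg⟩ := hZ J X c hc (e.hom ≫ f)
  refine ⟨s, fun j ↦ e.inv ≫ g j, ?_⟩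
  rw [← cancel_epi e.hom, hg, Preadditive.comp_sum]
  simp

lemma shift [HasShift C ℤ] [∀ n : ℤ, (shiftFunctor C n).Additive] {Z : C}
    (hZ : IsCompactObject.{t} Z) (n : ℤ) : IsCompactObject.{t} (Z⟦n⟧) :=
  hZ.map_equivalence (shiftFunctor C n)

end IsCompactObject

end Coproducts

section Pretriangulated

variable {C : Type u₁} [Category.{v₁} C] [Preadditive C] [HasZeroObject C] [HasShift C ℤ]
  [∀ n : ℤ, (shiftFunctor C n).Additive] [Pretriangulated C]

lemma yoneda_exact₁ (T : Triangle C) (hT : T ∈ distTriang C) {X : C} (f : T.obj₁⟦(1 : ℤ)⟧ ⟶ X)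
    (hf : T.mor₃ ≫ f = 0) : ∃ g : T.obj₂⟦(1 : ℤ)⟧ ⟶ X, f = T.mor₁⟦(1 : ℤ)⟧' ≫ g := by
  obtain ⟨g, hg⟩ : ∃ g : T.obj₂⟦(1 : ℤ)⟧ ⟶ X, f = (-T.mor₁⟦(1 : ℤ)⟧') ≫ g :=
    Triangle.yoneda_exact₃ _ (rot_of_distTriang _ hT) f hf
  exact ⟨-g, by rw [hg, Preadditive.neg_comp, Preadditive.comp_neg]⟩

section ConeOfCoproducts

variable {J : Type t} {T : J → Triangle C} (hT : ∀ j, T j ∈ distTriang C)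
  {S : Triangle C} (hS : S ∈ distTriang C) (φ : ∀ j, T j ⟶ S)
  (h₁ : IsColimit (Cofan.mk S.obj₁ fun j ↦ (φ j).hom₁))
  (h₂ : IsColimit (Cofan.mk S.obj₂ fun j ↦ (φ j).hom₂))

include hT hS h₁ h₂

lemma exists_desc_of_isColimit_cofan {W : C} (u : ∀ j, (T j).obj₃ ⟶ W) :
    ∃ d : S.obj₃ ⟶ W, ∀ j, (φ j).hom₃ ≫ d = u j := by
  have h₁' := isColimitCofanMkObjOfIsColimit (shiftFunctor C (1 : ℤ)) _ _ h₁
  obtain ⟨m, hm⟩ : ∃ m : S.obj₂ ⟶ W, ∀ j, (φ j).hom₂ ≫ m = (T j).mor₂ ≫ u j :=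
    ⟨_, Cofan.IsColimit.fac h₂ _⟩
  obtain ⟨x, hx⟩ := Triangle.yoneda_exact₂ S hS m <| Cofan.IsColimit.hom_ext h₁ _ _ fun j ↦ by
    rw [cofan_mk_inj, ← reassoc_of% (φ j).comm₁, hm,
      comp_distTriang_mor_zero₁₂_assoc _ (hT j), zero_comp, comp_zero]
  have correction (j : J) :
      ∃ r : (T j).obj₁⟦(1 : ℤ)⟧ ⟶ W, u j - (φ j).hom₃ ≫ x = (T j).mor₃ ≫ r :=
    Triangle.yoneda_exact₃ _ (hT j) _ (by
      rw [Preadditive.comp_sub, reassoc_of% (φ j).comm₂, ← hx, hm, sub_self])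
  choose r hr using correction
  obtain ⟨ρ, hρ⟩ : ∃ ρ : S.obj₁⟦(1 : ℤ)⟧ ⟶ W, ∀ j, (φ j).hom₁⟦(1 : ℤ)⟧' ≫ ρ = r j :=
    ⟨_, Cofan.IsColimit.fac h₁' _⟩
  refine ⟨x + S.mor₃ ≫ ρ, fun j ↦ ?_⟩
  rw [Preadditive.comp_add, ← reassoc_of% (φ j).comm₃, hρ, ← hr, add_sub_cancel]

lemma eq_zero_of_isColimit_cofan {W : C} (d : S.obj₃ ⟶ W) (hd : ∀ j, (φ j).hom₃ ≫ d = 0) :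
    d = 0 := by
  have h₁' := isColimitCofanMkObjOfIsColimit (shiftFunctor C (1 : ℤ)) _ _ h₁
  have h₂' := isColimitCofanMkObjOfIsColimit (shiftFunctor C (1 : ℤ)) _ _ h₂
  obtain ⟨p, rfl⟩ := Triangle.yoneda_exact₃ _ hS d <|
    Cofan.IsColimit.hom_ext h₂ _ _ fun j ↦ by
      rw [cofan_mk_inj, ← reassoc_of% (φ j).comm₂, hd, comp_zero, comp_zero]
  have factorization (j : J) : ∃ q : (T j).obj₂⟦(1 : ℤ)⟧ ⟶ W,
      (φ j).hom₁⟦(1 : ℤ)⟧' ≫ p = (T j).mor₁⟦(1 : ℤ)⟧' ≫ q :=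
    yoneda_exact₁ _ (hT j) _ (by rw [reassoc_of% (φ j).comm₃, hd])
  choose q hq using factorization
  obtain ⟨κ, hκ⟩ : ∃ κ : S.obj₂⟦(1 : ℤ)⟧ ⟶ W, ∀ j, (φ j).hom₂⟦(1 : ℤ)⟧' ≫ κ = q j :=
    ⟨_, Cofan.IsColimit.fac h₂' _⟩
  have hp : p = S.mor₁⟦(1 : ℤ)⟧' ≫ κ := Cofan.IsColimit.hom_ext h₁' _ _ fun j ↦ by
    rw [cofan_mk_inj, hq, ← Functor.map_comp_assoc, ← (φ j).comm₁, Functor.map_comp_assoc, hκ]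
  rw [hp, comp_distTriang_mor_zero₃₁_assoc _ hS, zero_comp]

lemma nonempty_isColimit_cofan_hom₃ :
    Nonempty (IsColimit (Cofan.mk S.obj₃ fun j ↦ (φ j).hom₃)) := by
  rw [nonempty_isColimit_cofan_iff]
  intro W u
  obtain ⟨d, hd⟩ := exists_desc_of_isColimit_cofan hT hS φ h₁ h₂ u
  exact ⟨d, hd, fun d' hd' ↦ sub_eq_zero.1 <|
    eq_zero_of_isColimit_cofan hT hS φ h₁ h₂ _ fun j ↦ by
      rw [Preadditive.comp_sub, hd j, show (φ j).hom₃ ≫ d' = u j from hd' j, sub_self]⟩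

end ConeOfCoproducts

variable {E : ObjectProperty C} [E.IsTriangulated] [E.IsClosedUnderIsomorphisms]

instance trW_isStableUnderCoproductsOfShape (J : Type t)
    [E.IsClosedUnderColimitsOfShape (Discrete J)] : E.trW.IsStableUnderCoproductsOfShape J :=
  .mk _ J fun X Y _ _ f hf ↦ by
    choose Z g h hT hZ using hf
    obtain ⟨Z', g', h', hS⟩ := distinguished_cocone_triangle (Limits.Sigma.map f)
    have hφ (j : J) : ∃ φ : Triangle.mk (f j) (g j) (h j) ⟶ Triangle.mk (Limits.Sigma.map f) g' h',
        φ.hom₁ = Sigma.ι X j ∧ φ.hom₂ = Sigma.ι Y j := by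
      obtain ⟨c, hc₂, hc₃⟩ := complete_distinguished_triangle_morphism _ _ (hT j) hS
        (Sigma.ι X j) (Sigma.ι Y j) (Sigma.ι_map f j).symm
      exact ⟨⟨_, _, c, (Sigma.ι_map f j).symm, hc₂, hc₃⟩, rfl, rfl⟩
    choose φ hφ₁ hφ₂ using hφ
    obtain ⟨hZ'⟩ := nonempty_isColimit_cofan_hom₃ hT hS φ
      (by simp only [hφ₁]; exact coproductIsCoproduct X)
      (by simp only [hφ₂]; exact coproductIsCoproduct Y)
    exact ⟨Z', g', h', hS, E.prop_of_isColimit hZ' fun j ↦ hZ j.as⟩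

lemma trW_of_trW_comp [IsTriangulated C] {X Y Z : C} (f : X ⟶ Y) (g : Y ⟶ Z) (hg : E.trW g)
    (hfg : E.trW (f ≫ g)) : E.trW f := by
  obtain ⟨Z₂₃, _, _, h₂₃, hZ₂₃⟩ := hg
  obtain ⟨Z₁₃, _, _, h₁₃, hZ₁₃⟩ := hfg
  obtain ⟨Z₁₂, a, b, h₁₂⟩ := distinguished_cocone_triangle f
  have octahedron := Triangulated.someOctahedron rfl h₁₂ h₂₃ h₁₃
  exact ⟨Z₁₂, a, b, h₁₂, E.ext_of_isTriangulatedClosed₁ _ octahedron.mem hZ₁₃ hZ₂₃⟩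

end Pretriangulated

section Telescope

variable {C : Type u₁} [Category.{v₁} C] [HasCoproducts.{t} C]

/-- The endomorphism of `∐ F n` given by the transition maps of a sequence `F`. The cone of
`𝟙 - telescopeShift F` is the homotopy colimit of `F`. The index type is lifted to `Type t` to
match the available coproducts. -/
noncomputable def telescopeShift (F : ℕ ⥤ C) :
    (∐ fun n : ULift.{t} ℕ ↦ F.obj n.down) ⟶ ∐ fun n : ULift.{t} ℕ ↦ F.obj n.down :=
  Sigma.desc fun n ↦ F.map (homOfLE n.down.le_succ) ≫
    Sigma.ι (fun n : ULift.{t} ℕ ↦ F.obj n.down) ⟨n.down + 1⟩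

@[simp]
lemma ι_telescopeShift (F : ℕ ⥤ C) (n : ℕ) :
    Sigma.ι (fun n : ULift.{t} ℕ ↦ F.obj n.down) ⟨n⟩ ≫ telescopeShift.{t} F =
      F.map (homOfLE n.le_succ) ≫ Sigma.ι (fun n : ULift.{t} ℕ ↦ F.obj n.down) ⟨n + 1⟩ :=
  Sigma.ι_desc _ _

lemma telescopeShift_naturality {F G : ℕ ⥤ C} (α : F ⟶ G) :
    telescopeShift.{t} F ≫ Limits.Sigma.map (fun n : ULift.{t} ℕ ↦ α.app n.down) =
      Limits.Sigma.map (fun n : ULift.{t} ℕ ↦ α.app n.down) ≫ telescopeShift.{t} G := by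
  ext ⟨n⟩
  rw [reassoc_of% ι_telescopeShift F n, Sigma.ι_map, Sigma.ι_map_assoc, ι_telescopeShift,
    α.naturality_assoc]

lemma ι_telescopeShift_const (X : C) (n : ℕ) :
    Sigma.ι (fun _ : ULift.{t} ℕ ↦ X) ⟨n⟩ ≫ telescopeShift.{t} ((Functor.const ℕ).obj X) =
      Sigma.ι (fun _ : ULift.{t} ℕ ↦ X) ⟨n + 1⟩ :=
  (ι_telescopeShift ((Functor.const ℕ).obj X) n).trans (id_comp _)

variable [Preadditive C]

/-- The telescope of a constant sequence splits: `X` is the cokernel of the split monomorphism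
`𝟙 - shift`, whose retraction is `-(ι₀ + ⋯ + ι_{n-1})` on the `n`-th summand. -/
noncomputable def constTelescopeSplitting (X : C) :
    (ShortComplex.mk (𝟙 _ - telescopeShift.{t} ((Functor.const ℕ).obj X))
      (Sigma.desc fun _ ↦ 𝟙 X) (by
        ext ⟨n⟩
        simp [Preadditive.sub_comp, Preadditive.comp_sub,
          reassoc_of% ι_telescopeShift_const X n])).Splitting where
  r := Sigma.desc fun n ↦ -∑ i ∈ Finset.range n.down, Sigma.ι (fun _ : ULift.{t} ℕ ↦ X) ⟨i⟩
  s := Sigma.ι (fun _ : ULift.{t} ℕ ↦ X) ⟨0⟩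
  f_r := by
    ext ⟨n⟩
    simp [Preadditive.sub_comp, Preadditive.comp_sub,
      reassoc_of% ι_telescopeShift_const X n, Finset.sum_range_succ]
  s_g := by simp
  id := by
    ext ⟨n⟩
    have telescoping : -∑ i ∈ Finset.range n, Sigma.ι (fun _ : ULift.{t} ℕ ↦ X) ⟨i⟩ +
        ∑ i ∈ Finset.range n, Sigma.ι (fun _ : ULift.{t} ℕ ↦ X) ⟨i + 1⟩ +
          Sigma.ι (fun _ : ULift.{t} ℕ ↦ X) ⟨0⟩ = Sigma.ι (fun _ : ULift.{t} ℕ ↦ X) ⟨n⟩ := by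
      rw [neg_add_eq_sub, ← Finset.sum_sub_distrib,
        Finset.sum_range_sub (fun i ↦ Sigma.ι (fun _ : ULift.{t} ℕ ↦ X) ⟨i⟩), sub_add_cancel]
    simpa [Preadditive.comp_sub, Preadditive.sum_comp, ι_telescopeShift_const] using telescoping

end Telescope

section CompactGenerator

lemma isZero_of_isTriangulatedGen {C : Type u₁} [Category.{v₁} C] [Preadditive C] [HasShift C ℤ]
    {Z : C} (hZ : IsTriangulatedGen Z) {X : C} (hX : ∀ (n : ℤ) (f : Z⟦n⟧ ⟶ X), f = 0) :
    IsZero X := by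
  by_contra hX'
  obtain ⟨n, f, hf⟩ := hZ X hX'
  exact hf (hX n f)

variable {C : Type u₁} [Category.{v₁} C] [Preadditive C] [HasZeroObject C] [HasShift C ℤ]
  [∀ n : ℤ, (shiftFunctor C n).Additive] [Pretriangulated C]

lemma nonempty_iso_obj₃_of_splitting {T : Triangle C} (hT : T ∈ distTriang C) {X : C}
    {p : T.obj₂ ⟶ X} {w : T.mor₁ ≫ p = 0} (s : (ShortComplex.mk T.mor₁ p w).Splitting) :
    Nonempty (T.obj₃ ≅ X) := by
  have mor₃_eq_zero : T.mor₃ = 0 :=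
    (Triangle.mor₃_eq_zero_iff_mono₁ T hT).2 s.mono_f
  have epi_mor₂ : Epi T.mor₂ := (Triangle.mor₃_eq_zero_iff_epi₂ T hT).1 mor₃_eq_zero
  obtain ⟨q, hq⟩ := Triangle.yoneda_exact₂ T hT p w
  refine ⟨⟨q, s.s ≫ T.mor₂, ?_, ?_⟩⟩
  · rw [← cancel_epi T.mor₂, ← reassoc_of% hq, comp_id]
    have id_eq : s.r ≫ T.mor₁ + p ≫ s.s = 𝟙 T.obj₂ := s.id
    rw [← assoc, ← sub_eq_of_eq_add' id_eq.symm, Preadditive.sub_comp, assoc,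
      comp_distTriang_mor_zero₁₂ T hT, comp_zero, sub_zero, id_comp]
  · rw [assoc, ← hq]
    exact s.s_g

lemma isZero_obj₃_of_bijective_of_isTriangulatedGen {Z : C} (hZ : IsTriangulatedGen Z)
    {T : Triangle C} (hT : T ∈ distTriang C)
    (hf : ∀ n : ℤ, Function.Bijective fun a : Z⟦n⟧ ⟶ T.obj₁ ↦ a ≫ T.mor₁) :
    IsZero T.obj₃ := by
  have injective_shift (n : ℤ) (a : Z⟦n⟧ ⟶ T.obj₁⟦(1 : ℤ)⟧) (ha : a ≫ T.mor₁⟦(1 : ℤ)⟧' = 0) :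
      a = 0 := by
    let e : Z⟦n⟧ ≅ Z⟦n - 1⟧⟦(1 : ℤ)⟧ := (shiftFunctorAdd' C (n - 1) 1 n (by simp)).app Z
    obtain ⟨b, hb⟩ := (shiftFunctor C (1 : ℤ)).map_surjective (e.inv ≫ a)
    have hb₀ : b = 0 := (hf (n - 1)).injective <| (shiftFunctor C (1 : ℤ)).map_injective <| by
      simp only [Functor.map_comp, hb, assoc, ha, comp_zero, zero_comp, Functor.map_zero]
    rw [← cancel_epi e.inv, ← hb, hb₀, Functor.map_zero, comp_zero]
  refine isZero_of_isTriangulatedGen hZ fun n u ↦ ?_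
  obtain ⟨b, rfl⟩ := Triangle.coyoneda_exact₃ _ hT u <| injective_shift n (u ≫ T.mor₃) <| by
    rw [assoc, comp_distTriang_mor_zero₃₁ _ hT, comp_zero]
  obtain ⟨a, rfl⟩ := (hf n).surjective b
  rw [assoc, comp_distTriang_mor_zero₁₂ _ hT, comp_zero]

lemma isIso_of_bijective_of_isTriangulatedGen {Z : C} (hZ : IsTriangulatedGen Z) {A B : C}
    (f : A ⟶ B) (hf : ∀ n : ℤ, Function.Bijective fun a : Z⟦n⟧ ⟶ A ↦ a ≫ f) : IsIso f := by
  obtain ⟨Q, g, h, hT⟩ := distinguished_cocone_triangle f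
  exact (Triangle.isZero₃_iff_isIso₁ _ hT).1
    (isZero_obj₃_of_bijective_of_isTriangulatedGen hZ hT hf)

lemma isIso_id_sub_telescopeShift [HasCoproducts.{t} C] {Z : C} (hZ : IsTriangulatedGen Z)
    (hc : IsCompactObject.{t} Z) (F : ℕ ⥤ C)
    (hF : ∀ (n : ℕ) (i : ℤ) (f : Z⟦i⟧ ⟶ F.obj n), f ≫ F.map (homOfLE n.le_succ) = 0) :
    IsIso (𝟙 _ - telescopeShift.{t} F) := by
  refine isIso_of_bijective_of_isTriangulatedGen hZ _ fun i ↦ ?_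
  have comp_telescopeShift (f : Z⟦i⟧ ⟶ ∐ fun n : ULift.{t} ℕ ↦ F.obj n.down) :
      f ≫ telescopeShift F = 0 := by
    obtain ⟨s, g, hg⟩ := hc.shift i _ _ _ (coproductIsCoproduct _) f
    rw [hg, Preadditive.sum_comp]
    refine Finset.sum_eq_zero fun n _ ↦ ?_
    rw [assoc, cofan_mk_inj, ι_telescopeShift, reassoc_of% hF, zero_comp]
  simp only [Preadditive.comp_sub, comp_id, comp_telescopeShift, sub_zero]
  exact Function.bijective_id

lemma exists_trW_forall_comp_eq_zero [HasCoproducts.{t} C] {Z : C}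
    (hs : ∀ (X : C) (n : ℤ), Small.{t} (Z⟦n⟧ ⟶ X)) (E : ObjectProperty C) [E.IsStableUnderShift ℤ]
    [∀ J : Type t, E.IsClosedUnderColimitsOfShape (Discrete J)] (hE : E Z) (Y : C) :
    ∃ (Y' : C) (y : Y ⟶ Y'), E.trW y ∧ ∀ (n : ℤ) (f : Z⟦n⟧ ⟶ Y), f ≫ y = 0 := by
  have := hs Y
  let J := Shrink.{t} (Σ n : ℤ, Z⟦n⟧ ⟶ Y)
  let cell : J ≃ Σ n : ℤ, Z⟦n⟧ ⟶ Y := (equivShrink _).symm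
  let attach : (∐ fun j : J ↦ Z⟦(cell j).1⟧) ⟶ Y := Sigma.desc fun j ↦ (cell j).2
  obtain ⟨Y', y, z, hT⟩ := distinguished_cocone_triangle attach
  refine ⟨Y', y, .mk' E hT (E.prop_colimit _ fun j ↦ E.le_shift _ _ hE), fun n f ↦ ?_⟩
  obtain ⟨j, hj⟩ := cell.surjective ⟨n, f⟩
  have cell_comp : (cell j).2 ≫ y = 0 := by
    rw [← Sigma.ι_desc (fun j ↦ (cell j).2) j, assoc,
      show attach ≫ y = 0 from comp_distTriang_mor_zero₁₂ _ hT, comp_zero]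
  rwa [hj] at cell_comp

lemma exists_sequence_of_compact_generator [HasCoproducts.{t} C] {Z : C}
    (hs : ∀ (X : C) (n : ℤ), Small.{t} (Z⟦n⟧ ⟶ X)) (E : ObjectProperty C) [E.IsStableUnderShift ℤ]
    [∀ J : Type t, E.IsClosedUnderColimitsOfShape (Discrete J)] (hE : E Z) (X : C) :
    ∃ F : ℕ ⥤ C, F.obj 0 = X ∧ (∀ n : ℕ, E.trW (F.map (homOfLE n.le_succ))) ∧
      ∀ (n : ℕ) (i : ℤ) (f : Z⟦i⟧ ⟶ F.obj n), f ≫ F.map (homOfLE n.le_succ) = 0 := by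
  choose next y hy hzero using exists_trW_forall_comp_eq_zero hs E hE
  let Y : ℕ → C := fun n ↦ n.rec X fun _ ↦ next
  have map_succ (n : ℕ) := Functor.ofSequence_map_homOfLE_succ (X := Y) (fun n ↦ y (Y n)) n
  refine ⟨Functor.ofSequence (X := Y) fun n ↦ y (Y n), rfl, fun n ↦ ?_, fun n i f ↦ ?_⟩
  · exact map_succ n ▸ hy (Y n)
  · exact map_succ n ▸ hzero (Y n) i f

lemma prop_of_compact_generator [IsTriangulated C] [HasCoproducts.{t} C] {Z : C}
    (hZ : IsTriangulatedGen Z) (hc : IsCompactObject.{t} Z)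
    (hs : ∀ (X : C) (n : ℤ), Small.{t} (Z⟦n⟧ ⟶ X))
    (E : ObjectProperty C) [E.IsTriangulated] [E.IsClosedUnderIsomorphisms]
    [∀ J : Type t, E.IsClosedUnderColimitsOfShape (Discrete J)] (hE : E Z) (X : C) : E X := by
  obtain ⟨F, rfl, trW_map_succ, hF⟩ := exists_sequence_of_compact_generator hs E hE X
  let α : (Functor.const ℕ).obj (F.obj 0) ⟶ F :=
    { app n := F.map (homOfLE n.zero_le)
      naturality _ _ _ := (id_comp _).trans (F.map_comp _ _) }
  have trW_app (n : ℕ) : E.trW (α.app n) := by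
    induction n with
    | zero => simpa [α] using E.trW.id_mem (F.obj 0)
    | succ n ih =>
      rw [show α.app (n + 1) = α.app n ≫ F.map (homOfLE n.le_succ) from F.map_comp _ _]
      exact E.trW.comp_mem _ _ ih (trW_map_succ n)
  let A := Limits.Sigma.map fun n : ULift.{t} ℕ ↦ α.app n.down
  have trW_A : E.trW A := E.trW.colimMap _ fun n ↦ trW_app n.as.down
  have comm : (𝟙 _ - telescopeShift.{t} ((Functor.const ℕ).obj (F.obj 0))) ≫ A =
      A ≫ (𝟙 _ - telescopeShift.{t} F) := by
    rw [Preadditive.sub_comp, Preadditive.comp_sub, id_comp, comp_id]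
    exact congrArg _ (telescopeShift_naturality α)
  have := isIso_id_sub_telescopeShift hZ hc F hF
  have trW_const : E.trW (𝟙 _ - telescopeShift.{t} ((Functor.const ℕ).obj (F.obj 0))) :=
    trW_of_trW_comp _ A trW_A (comm ▸ E.trW.comp_mem _ _ trW_A (E.trW_of_isIso _))
  obtain ⟨Q, g, h, hT, hQ⟩ := trW_const
  obtain ⟨e⟩ := nonempty_iso_obj₃_of_splitting hT (constTelescopeSplitting (F.obj 0))
  exact E.prop_of_iso e hQ

end CompactGenerator

section BijectiveOnGradedHom

variable {C : Type u₁} [Category.{v₁} C] {D : Type u₂} [Category.{v₂} D] {F : C ⥤ D}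

lemma map_bijective_of_iso {X Y X' Y' : C}
    (h : Function.Bijective (F.map : (X ⟶ Y) → (F.obj X ⟶ F.obj Y))) (e : X ≅ X') (e' : Y ≅ Y') :
    Function.Bijective (F.map : (X' ⟶ Y') → (F.obj X' ⟶ F.obj Y')) := by
  have conj : (F.map : (X' ⟶ Y') → _) =
      (F.mapIso e).homCongr (F.mapIso e') ∘ F.map ∘ (e.homCongr e').symm := by
    ext f
    simp [← Functor.map_comp]
  rw [conj]
  exact (Equiv.bijective _).comp (h.comp (Equiv.bijective _))

variable [HasShift C ℤ]

/-- `F` induces bijections `Hom(X, Y⟦n⟧) → Hom(F X, F (Y⟦n⟧))` for all `n : ℤ`. For fixed `X`, or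
fixed `Y`, this is a localizing condition on the other variable, which reduces full faithfulness
of `F` to generators. -/
def BijectiveOnGradedHom (F : C ⥤ D) (X Y : C) : Prop :=
  ∀ n : ℤ, Function.Bijective (F.map : (X ⟶ Y⟦n⟧) → (F.obj X ⟶ F.obj (Y⟦n⟧)))

namespace BijectiveOnGradedHom

lemma map_bijective {X Y : C} (h : BijectiveOnGradedHom F X Y) :
    Function.Bijective (F.map : (X ⟶ Y) → (F.obj X ⟶ F.obj Y)) :=
  map_bijective_of_iso (h 0) (Iso.refl X) ((shiftFunctorZero C ℤ).app Y)

lemma of_iso {X Y X' Y' : C} (h : BijectiveOnGradedHom F X Y) (e : X ≅ X') (e' : Y ≅ Y') :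
    BijectiveOnGradedHom F X' Y' :=
  fun n ↦ map_bijective_of_iso (h n) e ((shiftFunctor C n).mapIso e')

lemma shift_right {X Y : C} (h : BijectiveOnGradedHom F X Y) (m : ℤ) :
    BijectiveOnGradedHom F X (Y⟦m⟧) :=
  fun n ↦ map_bijective_of_iso (h (m + n)) (Iso.refl X) ((shiftFunctorAdd C m n).app Y)

variable [HasShift D ℤ] [F.CommShift ℤ]

lemma shift_left {X Y : C} (h : BijectiveOnGradedHom F X Y) (m : ℤ) :
    BijectiveOnGradedHom F (X⟦m⟧) Y := by
  intro n
  let shiftC := Functor.FullyFaithful.ofFullyFaithful (shiftFunctor C m)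
  let shiftD := Functor.FullyFaithful.ofFullyFaithful (shiftFunctor D m)
  have conj : (F.map : (X⟦m⟧ ⟶ Y⟦n - m⟧⟦m⟧) → _) =
      ((F.commShiftIso m).app X).symm.homCongr ((F.commShiftIso m).app (Y⟦n - m⟧)).symm ∘
        (shiftFunctor D m).map ∘ F.map ∘ shiftC.homEquiv.symm := by
    ext f
    obtain ⟨f, rfl⟩ := (shiftFunctor C m).map_surjective f
    simp
  refine map_bijective_of_iso ?_ (Iso.refl _)
    ((shiftFunctorAdd' C (n - m) m n (by simp)).symm.app Y)
  rw [conj]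
  exact (Equiv.bijective _).comp
    ((shiftD.map_bijective _ _).comp ((h _).comp shiftC.homEquiv.symm.bijective))

end BijectiveOnGradedHom

end BijectiveOnGradedHom

section FiveLemma

variable {C : Type u₁} [Category.{v₁} C] [Preadditive C] [HasZeroObject C] [HasShift C ℤ]
  [∀ n : ℤ, (shiftFunctor C n).Additive] [Pretriangulated C]
  {D : Type u₂} [Category.{v₂} D] [Preadditive D] [HasZeroObject D] [HasShift D ℤ]
  [∀ n : ℤ, (shiftFunctor D n).Additive] [Pretriangulated D]

lemma exact_rightComp {T : Triangle C} (hT : T ∈ distTriang C) (Z : C) :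
    Function.Exact (Preadditive.rightComp Z T.mor₁) (Preadditive.rightComp Z T.mor₂) := by
  refine fun f ↦ ⟨fun hf ↦ ?_, ?_⟩
  · obtain ⟨g, hg⟩ := Triangle.coyoneda_exact₂ T hT f hf
    exact ⟨g, hg.symm⟩
  · rintro ⟨g, rfl⟩
    exact (assoc _ _ _).trans (by rw [comp_distTriang_mor_zero₁₂ _ hT, comp_zero])

lemma exact_leftComp {T : Triangle C} (hT : T ∈ distTriang C) (Z : C) :
    Function.Exact (Preadditive.leftComp Z T.mor₂) (Preadditive.leftComp Z T.mor₁) := by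
  refine fun f ↦ ⟨fun hf ↦ ?_, ?_⟩
  · obtain ⟨g, hg⟩ := Triangle.yoneda_exact₂ T hT f hf
    exact ⟨g, hg.symm⟩
  · rintro ⟨g, rfl⟩
    exact (assoc _ _ _).symm.trans (by rw [comp_distTriang_mor_zero₁₂ _ hT, zero_comp])

variable {F : C ⥤ D} [F.CommShift ℤ] [F.IsTriangulated]

lemma map_bijective_obj₂_right {T : Triangle C} (hT : T ∈ distTriang C) {Z : C}
    (h₁ : BijectiveOnGradedHom F Z T.obj₁) (h₃ : BijectiveOnGradedHom F Z T.obj₃) :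
    Function.Bijective (F.map : (Z ⟶ T.obj₂) → _) := by
  have hInvRot := inv_rot_of_distTriang _ hT
  have hRot := rot_of_distTriang _ hT
  exact AddMonoidHom.bijective_of_surjective_of_bijective_of_bijective_of_injective
    (Preadditive.rightComp Z T.invRotate.mor₁) (Preadditive.rightComp Z T.mor₁)
    (Preadditive.rightComp Z T.mor₂) (Preadditive.rightComp Z T.mor₃)
    (Preadditive.rightComp (F.obj Z) (F.map T.invRotate.mor₁))
    (Preadditive.rightComp (F.obj Z) (F.map T.mor₁))
    (Preadditive.rightComp (F.obj Z) (F.map T.mor₂))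
    (Preadditive.rightComp (F.obj Z) (F.map T.mor₃))
    F.mapAddHom F.mapAddHom F.mapAddHom F.mapAddHom F.mapAddHom
    (AddMonoidHom.ext fun a ↦ (F.map_comp a _).symm)
    (AddMonoidHom.ext fun a ↦ (F.map_comp a _).symm)
    (AddMonoidHom.ext fun a ↦ (F.map_comp a _).symm)
    (AddMonoidHom.ext fun a ↦ (F.map_comp a _).symm)
    (exact_rightComp hInvRot Z) (exact_rightComp hT Z) (exact_rightComp hRot Z)
    (exact_rightComp (F.map_distinguished _ hInvRot) _)
    (exact_rightComp (F.map_distinguished _ hT) _)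
    (exact_rightComp (F.map_distinguished _ hRot) _)
    (h₃ (-1)).surjective h₁.map_bijective h₃.map_bijective (h₁ 1).injective

lemma map_bijective_obj₂_left {T : Triangle C} (hT : T ∈ distTriang C) {Z : C}
    (h₁ : BijectiveOnGradedHom F T.obj₁ Z) (h₃ : BijectiveOnGradedHom F T.obj₃ Z) :
    Function.Bijective (F.map : (T.obj₂ ⟶ Z) → _) := by
  have hInvRot := inv_rot_of_distTriang _ hT
  have hRot := rot_of_distTriang _ hT
  exact AddMonoidHom.bijective_of_surjective_of_bijective_of_bijective_of_injective
    (Preadditive.leftComp Z T.mor₃) (Preadditive.leftComp Z T.mor₂)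
    (Preadditive.leftComp Z T.mor₁) (Preadditive.leftComp Z T.invRotate.mor₁)
    (Preadditive.leftComp (F.obj Z) (F.map T.mor₃))
    (Preadditive.leftComp (F.obj Z) (F.map T.mor₂))
    (Preadditive.leftComp (F.obj Z) (F.map T.mor₁))
    (Preadditive.leftComp (F.obj Z) (F.map T.invRotate.mor₁))
    F.mapAddHom F.mapAddHom F.mapAddHom F.mapAddHom F.mapAddHom
    (AddMonoidHom.ext fun a ↦ (F.map_comp _ a).symm)
    (AddMonoidHom.ext fun a ↦ (F.map_comp _ a).symm)
    (AddMonoidHom.ext fun a ↦ (F.map_comp _ a).symm)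
    (AddMonoidHom.ext fun a ↦ (F.map_comp _ a).symm)
    (exact_leftComp hRot Z) (exact_leftComp hT Z) (exact_leftComp hInvRot Z)
    (exact_leftComp (F.map_distinguished _ hRot) _) (exact_leftComp (F.map_distinguished _ hT) _)
    (exact_leftComp (F.map_distinguished _ hInvRot) _)
    (h₁.shift_left 1).map_bijective.surjective h₃.map_bijective h₁.map_bijective
    (h₃.shift_left (-1)).map_bijective.injective

end FiveLemma

section LocalizingSubcategory

lemma isClosedUnderColimitsOfShape_discrete {C : Type u₁} [Category.{v₁} C]
    {E : ObjectProperty C} {J : Type t}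
    (hE : ∀ (X : J → C) (c : Cofan X), IsColimit c → (∀ j, E (X j)) → E c.pt) :
    E.IsClosedUnderColimitsOfShape (Discrete J) where
  colimitsOfShape_le _ := fun ⟨p⟩ ↦
    hE (fun j ↦ p.diag.obj ⟨j⟩) _
      ((IsColimit.precomposeHomEquiv Discrete.natIsoFunctor.symm _).symm p.isColimit)
      fun j ↦ p.prop_diag_obj ⟨j⟩

variable {C : Type u₁} [Category.{v₁} C] [Preadditive C] [HasZeroObject C] [HasShift C ℤ]
  [∀ n : ℤ, (shiftFunctor C n).Additive] [Pretriangulated C]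

/-- The localizing subcategory generated by `Z`: the smallest triangulated subcategory closed under
isomorphisms and coproducts which contains `Z`. -/
def localizingSubcategory (Z : C) : ObjectProperty C := fun X ↦
  ∀ (E : ObjectProperty C) [E.IsTriangulated] [E.IsClosedUnderIsomorphisms]
    [∀ J : Type t, E.IsClosedUnderColimitsOfShape (Discrete J)], E Z → E X

variable (Z : C)

lemma localizingSubcategory_self : localizingSubcategory.{t} Z Z := fun _ _ _ _ hZ ↦ hZ

instance : (localizingSubcategory.{t} Z).IsClosedUnderIsomorphisms where
  of_iso e hX E _ _ _ hZ := E.prop_of_iso e (hX E hZ)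

instance (J : Type t) :
    (localizingSubcategory.{t} Z).IsClosedUnderColimitsOfShape (Discrete J) :=
  isClosedUnderColimitsOfShape_discrete fun _ _ hc hX E _ _ _ hZ ↦
    E.prop_of_isColimit hc fun j ↦ hX j.as E hZ

instance : (localizingSubcategory.{t} Z).IsTriangulated where
  exists_zero := ⟨_, isZero_zero C, fun E _ _ _ _ ↦ E.prop_zero⟩
  isStableUnderShiftBy n := ⟨fun _ hX E _ _ _ hZ ↦ E.le_shift n _ (hX E hZ)⟩
  toIsTriangulatedClosed₂ := .mk' fun T hT h₁ h₃ E _ _ _ hZ ↦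
    E.ext_of_isTriangulatedClosed₂ T hT (h₁ E hZ) (h₃ E hZ)

variable {D : Type u₂} [Category.{v₂} D] [Preadditive D] [HasZeroObject D] [HasShift D ℤ]
  [∀ n : ℤ, (shiftFunctor D n).Additive] [Pretriangulated D]
  (F : C ⥤ D)

instance : ObjectProperty.IsClosedUnderIsomorphisms (BijectiveOnGradedHom F Z) where
  of_iso e h := h.of_iso (Iso.refl _) e

instance : ObjectProperty.IsClosedUnderIsomorphisms (fun X ↦ BijectiveOnGradedHom F X Z) where
  of_iso e h := h.of_iso e (Iso.refl _)

section

variable [F.CommShift ℤ] [F.IsTriangulated]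

instance : ObjectProperty.IsTriangulated (BijectiveOnGradedHom F Z) where
  exists_zero := ⟨_, isZero_zero C, fun n ↦ by
    have isZero := (shiftFunctor C n).map_isZero (isZero_zero C)
    exact ⟨fun _ _ _ ↦ isZero.eq_of_tgt _ _, fun _ ↦ ⟨0, (F.map_isZero isZero).eq_of_tgt _ _⟩⟩⟩
  isStableUnderShiftBy m := ⟨fun _ h ↦ h.shift_right m⟩
  toIsTriangulatedClosed₂ := .mk' fun T hT h₁ h₃ n ↦ map_bijective_obj₂_right
    (Triangle.shift_distinguished T hT n) (h₁.shift_right n) (h₃.shift_right n)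

instance : ObjectProperty.IsTriangulated (fun X ↦ BijectiveOnGradedHom F X Z) where
  exists_zero := ⟨_, isZero_zero C, fun _ ↦ ⟨fun _ _ _ ↦ (isZero_zero C).eq_of_src _ _,
    fun _ ↦ ⟨0, (F.map_isZero (isZero_zero C)).eq_of_src _ _⟩⟩⟩
  isStableUnderShiftBy m := ⟨fun _ h ↦ h.shift_left m⟩
  toIsTriangulatedClosed₂ := .mk' fun _ hT h₁ h₃ n ↦ map_bijective_obj₂_left hT
    (h₁.shift_right n) (h₃.shift_right n)

end

end LocalizingSubcategory

section

variable {C : Type u₁} [Category.{v₁} C] {D : Type u₂} [Category.{v₂} D] (F : C ⥤ D)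
  [∀ J : Type t, PreservesColimitsOfShape (Discrete J) F]

lemma isClosedUnderColimitsOfShape_bijectiveOnGradedHom_left [HasShift C ℤ] (Z : C) (J : Type t) :
    ObjectProperty.IsClosedUnderColimitsOfShape (fun X ↦ BijectiveOnGradedHom F X Z)
      (Discrete J) := by
  refine isClosedUnderColimitsOfShape_discrete fun X c hc h n ↦ ?_
  have hFc := Cofan.isColimitMapCoconeEquiv F X c (isColimitOfPreserves F hc)
  refine ⟨fun f g hfg ↦ Cofan.IsColimit.hom_ext hc _ _ fun j ↦ (h j n).injective ?_, fun f ↦ ?_⟩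
  · rw [Functor.map_comp, Functor.map_comp, hfg]
  · choose g hg using fun j ↦ (h j n).surjective (F.map (c.inj j) ≫ f)
    exact ⟨Cofan.IsColimit.desc hc g, Cofan.IsColimit.hom_ext hFc _ _ fun j ↦ by
      rw [cofan_mk_inj, ← Functor.map_comp, Cofan.IsColimit.fac, hg]⟩

variable [Preadditive C] [Preadditive D] [F.Additive]

lemma map_bijective_of_isCompactObject {Z : C} (hZ : IsCompactObject.{t} Z)
    (hFZ : IsCompactObject.{t} (F.obj Z)) {J : Type t} {X : J → C} {c : Cofan X} (hc : IsColimit c)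
    (h : ∀ j, Function.Bijective (F.map : (Z ⟶ X j) → _)) :
    Function.Bijective (F.map : (Z ⟶ c.pt) → _) := by
  constructor
  · refine (injective_iff_map_eq_zero (F.mapAddHom (X := Z) (Y := c.pt))).2 fun f hf ↦ ?_
    obtain ⟨s, g, rfl⟩ := hZ J X c hc f
    refine Finset.sum_eq_zero fun j hj ↦ ?_
    obtain ⟨p, hp, hp'⟩ := exists_proj_of_isColimit hc j
    have comp_proj : (∑ i ∈ s, g i ≫ c.inj i) ≫ p = g j := by
      rw [Preadditive.sum_comp, Finset.sum_eq_single_of_mem j hj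
        fun i _ hi ↦ by rw [assoc, hp' i hi, comp_zero], assoc, hp, comp_id]
    have hg : g j = 0 := (h j).injective <| by
      rw [← comp_proj, F.map_comp, show F.map (∑ i ∈ s, g i ≫ c.inj i) = 0 from hf, zero_comp,
        F.map_zero]
    rw [hg, zero_comp]
  · intro f
    obtain ⟨s, g, rfl⟩ := hFZ J _ _
      (Cofan.isColimitMapCoconeEquiv F X c (isColimitOfPreserves F hc)) f
    choose g' hg' using fun j ↦ (h j).surjective (g j)
    exact ⟨∑ j ∈ s, g' j ≫ c.inj j, by simp [hg']⟩

lemma isClosedUnderColimitsOfShape_bijectiveOnGradedHom_right [HasShift C ℤ] {Z : C}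
    (hZ : IsCompactObject.{t} Z) (hFZ : IsCompactObject.{t} (F.obj Z)) (J : Type t) :
    ObjectProperty.IsClosedUnderColimitsOfShape (BijectiveOnGradedHom F Z) (Discrete J) :=
  isClosedUnderColimitsOfShape_discrete fun _ c hc h n ↦
    map_bijective_of_isCompactObject F hZ hFZ
      (isColimitCofanMkObjOfIsColimit (shiftFunctor C n) _ _
        (hc.ofIsoColimit (Cocone.ext (Iso.refl _)))) fun j ↦ h j n

end

section Equivalence

variable {C : Type u₁} [Category.{v₁} C] [Preadditive C] [HasZeroObject C] [HasShift C ℤ]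
  [∀ n : ℤ, (shiftFunctor C n).Additive] [Pretriangulated C]
  {D : Type u₂} [Category.{v₂} D] [Preadditive D] [HasZeroObject D] [HasShift D ℤ]
  [∀ n : ℤ, (shiftFunctor D n).Additive] [Pretriangulated D]
  (F : C ⥤ D) [F.CommShift ℤ] [F.IsTriangulated]
  [∀ J : Type t, PreservesColimitsOfShape (Discrete J) F] {Z : C}

theorem map_bijective_of_localizingSubcategory (hZ : IsCompactObject.{t} Z)
    (hFZ : IsCompactObject.{t} (F.obj Z)) (h : BijectiveOnGradedHom F Z Z) {X Y : C}
    (hX : localizingSubcategory.{t} Z X) (hY : localizingSubcategory.{t} Z Y) :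
    Function.Bijective (F.map : (X ⟶ Y) → _) := by
  have := isClosedUnderColimitsOfShape_bijectiveOnGradedHom_right.{t} F hZ hFZ
  have := isClosedUnderColimitsOfShape_bijectiveOnGradedHom_left.{t} F Y
  exact (hX (fun X ↦ BijectiveOnGradedHom F X Y) (hY (BijectiveOnGradedHom F Z) h)).map_bijective

theorem isEquivalence_ι_comp_of_compact_generator [HasCoproducts.{t} C] [HasCoproducts.{t} D]
    [IsTriangulated C] [IsTriangulated D] (hZ : IsCompactObject.{t} Z)
    (hFZ : IsCompactObject.{t} (F.obj Z)) (h : BijectiveOnGradedHom F Z Z)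
    (hgen : IsTriangulatedGen (F.obj Z))
    (hs : ∀ (X : D) (n : ℤ), Small.{t} ((F.obj Z)⟦n⟧ ⟶ X)) :
    ((localizingSubcategory.{t} Z).ι ⋙ F).IsEquivalence := by
  have bijective := fun X Y : (localizingSubcategory.{t} Z).FullSubcategory ↦
    (map_bijective_of_localizingSubcategory F hZ hFZ h X.property Y.property).comp
      ((localizingSubcategory.{t} Z).fullyFaithfulι.map_bijective X Y)
  have : ((localizingSubcategory.{t} Z).ι ⋙ F).Faithful := ⟨fun h ↦ (bijective _ _).injective h⟩
  have : ((localizingSubcategory.{t} Z).ι ⋙ F).Full := ⟨(bijective _ _).surjective⟩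
  have : ((localizingSubcategory.{t} Z).ι ⋙ F).EssSurj :=
    ⟨prop_of_compact_generator hgen hFZ hs ((localizingSubcategory.{t} Z).ι ⋙ F).essImage
      (((localizingSubcategory.{t} Z).ι ⋙ F).obj_mem_essImage ⟨Z, localizingSubcategory_self Z⟩)⟩
  exact {}

end Equivalence

section Localization

variable {C : Type u₁} [Category.{v₁} C] {D : Type u₂} [Category.{v₂} D]

lemma preservesColimitsOfShape_of_nonempty_isColimit {J : Type t}
    [HasColimitsOfShape (Discrete J) C] (F : C ⥤ D)
    (hF : ∀ X : J → C, Nonempty (IsColimit (Cofan.mk (F.obj (∐ X)) fun j ↦ F.map (Sigma.ι X j)))) :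
    PreservesColimitsOfShape (Discrete J) F :=
  have (X : J → C) : PreservesColimit (Discrete.functor X) F :=
    preservesColimit_of_preserves_colimit_cocone (coproductIsCoproduct X)
      ((isColimitMapCoconeCofanMkEquiv F X _).symm (hF X).some)
  preservesColimitsOfShape_of_discrete F

lemma hasCoproducts_of_essSurj (F : C ⥤ D) [F.EssSurj] [HasCoproducts.{t} C]
    [∀ J : Type t, PreservesColimitsOfShape (Discrete J) F] : HasCoproducts.{t} D := by
  refine fun J ↦ ⟨fun X ↦ ?_⟩
  have : HasColimit (Discrete.functor fun j : J ↦ F.obj (F.objPreimage (X.obj ⟨j⟩))) :=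
    ⟨_, isColimitCofanMkObjOfIsColimit F _ _ (coproductIsCoproduct _)⟩
  exact hasColimit_of_iso
    (show X ≅ Discrete.functor fun j : J ↦ F.obj (F.objPreimage (X.obj ⟨j⟩)) from
      Discrete.natIso fun j ↦ (F.objObjPreimageIso (X.obj j)).symm)

variable {W : MorphismProperty C} {J : Type t} [HasColimitsOfShape (Discrete J) C]
  [W.IsStableUnderCoproductsOfShape J]

lemma sigma_desc_comp_inj_mem {Z X : J → C} {c : Cofan X} (hc : IsColimit c) (s : ∀ j, Z j ⟶ X j)
    (hs : ∀ j, W (s j)) : W (Sigma.desc fun j ↦ s j ≫ c.inj j) :=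
  MorphismProperty.IsStableUnderColimitsOfShape.condition (W := W) _ _ _ _
    (coproductIsCoproduct Z) hc (Discrete.natTrans fun j ↦ s j.as) (fun j ↦ hs j.as) _
    fun j ↦ Sigma.ι_desc _ j.as

variable (W) (L : C ⥤ D) [L.IsLocalization W] [W.HasRightCalculusOfFractions]

include W

lemma map_eq_map_of_isColimit {X : J → C} {c : Cofan X} (hc : IsColimit c) {Y : C} (f g : c.pt ⟶ Y)
    (h : ∀ j, L.map (c.inj j ≫ f) = L.map (c.inj j ≫ g)) : L.map f = L.map g := by
  choose Z s hs hsfg using fun j ↦ (MorphismProperty.map_eq_iff_precomp L W _ _).1 (h j)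
  exact (MorphismProperty.map_eq_iff_precomp L W _ _).2
    ⟨_, _, sigma_desc_comp_inj_mem hc s hs, Sigma.hom_ext _ _ fun j ↦ by simpa using hsfg j⟩

lemma localization_hom_ext_of_isColimit [W.HasLeftCalculusOfFractions] {X : J → C} {c : Cofan X}
    (hc : IsColimit c) {Y : D} {f g : L.obj c.pt ⟶ Y}
    (h : ∀ j, L.map (c.inj j) ≫ f = L.map (c.inj j) ≫ g) : f = g := by
  have := Localization.essSurj L W
  let e := L.objObjPreimageIso Y
  obtain ⟨φ, hf, hg⟩ := Localization.exists_leftFraction₂ L W (f ≫ e.inv) (g ≫ e.inv)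
  have : IsIso (L.map φ.s) := Localization.inverts L W _ φ.hs
  have hf' : f ≫ e.inv ≫ L.map φ.s = L.map φ.f := by
    rw [← assoc, hf]; exact φ.fst.map_comp_map_s L _
  have hg' : g ≫ e.inv ≫ L.map φ.s = L.map φ.f' := by
    rw [← assoc, hg]; exact φ.snd.map_comp_map_s L _
  rw [← cancel_mono (e.inv ≫ L.map φ.s), hf', hg']
  refine map_eq_map_of_isColimit W L hc _ _ fun j ↦ ?_
  rw [L.map_comp, L.map_comp, ← hf', ← hg', reassoc_of% h j]

theorem preservesColimitsOfShape_of_isLocalization [W.HasLeftCalculusOfFractions] :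
    PreservesColimitsOfShape (Discrete J) L := by
  refine preservesColimitsOfShape_of_nonempty_isColimit L fun X ↦ ?_
  rw [nonempty_isColimit_cofan_iff]
  intro Y f
  have := Localization.essSurj L W
  let e := L.objObjPreimageIso Y
  choose φ hφ using fun j ↦ Localization.exists_rightFraction L W (f j ≫ e.inv)
  let s := Sigma.desc fun j ↦ (φ j).s ≫ Sigma.ι X j
  have hs : W s := sigma_desc_comp_inj_mem (coproductIsCoproduct X) _ fun j ↦ (φ j).hs
  have : IsIso (L.map s) := Localization.inverts L W _ hs
  have fac (j : J) :
      L.map (Sigma.ι X j) ≫ inv (L.map s) ≫ L.map (Sigma.desc fun j ↦ (φ j).f) ≫ e.hom = f j := by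
    have : IsIso (L.map (φ j).s) := Localization.inverts L W _ (φ j).hs
    have hs' : (φ j).s ≫ Sigma.ι X j = Sigma.ι (fun j ↦ (φ j).X') j ≫ s :=
      (Sigma.ι_desc (fun j ↦ (φ j).s ≫ Sigma.ι X j) j).symm
    rw [← cancel_epi (L.map (φ j).s), ← L.map_comp_assoc, hs', L.map_comp_assoc,
      IsIso.hom_inv_id_assoc, ← L.map_comp_assoc, Sigma.ι_desc,
      ← (φ j).map_s_comp_map L (Localization.inverts L W), ← hφ]
    simp
  exact ⟨_, fac, fun y hy ↦ localization_hom_ext_of_isColimit W L (coproductIsCoproduct X) fun j ↦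
    (hy j).trans (fac j).symm⟩

end Localization

section Complexes

variable {C : Type u₁} [Category.{v₁} C] [Abelian C]

-- A homotopy is a morphism to the path object, so it can be glued along a coproduct.
lemma nonempty_homotopy_of_isColimit {J : Type t} {X : J → CochainComplex C ℤ} {c : Cofan X}
    (hc : IsColimit c) {Y : CochainComplex C ℤ} (f g : c.pt ⟶ Y)
    (h : ∀ j, Nonempty (Homotopy (c.inj j ≫ f) (c.inj j ≫ g))) : Nonempty (Homotopy f g) := by
  let H := fun j ↦ (h j).some
  let toPath : c.pt ⟶ Y.pathObject :=
    Cofan.IsColimit.desc hc fun j ↦ HomologicalComplex.pathObject.lift _ _ (H j)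
  have hf : toPath ≫ HomologicalComplex.pathObject.π₀ Y = f :=
    Cofan.IsColimit.hom_ext hc _ _ fun j ↦ by simp [toPath]
  have hg : toPath ≫ HomologicalComplex.pathObject.π₁ Y = g :=
    Cofan.IsColimit.hom_ext hc _ _ fun j ↦ by simp [toPath]
  rw [← hf, ← hg]
  exact ⟨(HomologicalComplex.pathObject.homotopy₀₁ Y fun i ↦ ⟨i + 1, rfl⟩).compLeft toPath⟩

instance preservesColimitsOfShape_quotient (J : Type t) [HasColimitsOfShape (Discrete J) C] :
    PreservesColimitsOfShape (Discrete J) (HomotopyCategory.quotient C (ComplexShape.up ℤ)) := by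
  refine preservesColimitsOfShape_of_nonempty_isColimit _ fun X ↦ ?_
  rw [nonempty_isColimit_cofan_iff]
  intro Y f
  obtain ⟨Y, rfl⟩ := HomotopyCategory.quotient_obj_surjective Y
  choose g hg using fun j ↦ (HomotopyCategory.quotient C (ComplexShape.up ℤ)).map_surjective (f j)
  refine ⟨(HomotopyCategory.quotient C _).map (Sigma.desc g), fun j ↦ ?_, fun y hy ↦ ?_⟩
  · rw [cofan_mk_inj, ← Functor.map_comp, Sigma.ι_desc, hg]
  · obtain ⟨y, rfl⟩ := (HomotopyCategory.quotient C (ComplexShape.up ℤ)).map_surjective y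
    obtain ⟨H⟩ := nonempty_homotopy_of_isColimit (coproductIsCoproduct X) y (Sigma.desc g) fun j ↦
      ⟨HomotopyCategory.homotopyOfEq _ _ (by
        rw [cofan_mk_inj, Sigma.ι_desc, hg, Functor.map_comp]; exact hy j)⟩
    exact HomotopyCategory.eq_of_homotopy _ _ H

instance hasCoproducts_homotopyCategory [HasCoproducts.{t} C] :
    HasCoproducts.{t} (HomotopyCategory C (ComplexShape.up ℤ)) :=
  hasCoproducts_of_essSurj (HomotopyCategory.quotient C _)

lemma exact_of_forall_exact_evaluation {K : Type t} [Category.{v₂} K] (S : ShortComplex (K ⥤ C))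
    (h : ∀ k, (S.map ((evaluation K C).obj k)).Exact) : S.Exact := by
  rw [ShortComplex.exact_iff_isZero_homology, Functor.isZero_iff]
  exact fun k ↦ ((ShortComplex.exact_iff_isZero_homology _).1 (h k)).of_iso
    (S.mapHomologyIso ((evaluation K C).obj k)).symm

lemma exactAt_of_isColimit {K : Type t} [Category.{v₂} K] [HasColimitsOfShape K C]
    [HasExactColimitsOfShape K C] {F : K ⥤ CochainComplex C ℤ} {c : Cocone F} (hc : IsColimit c)
    (n : ℤ) (h : ∀ k, (F.obj k).ExactAt n) : c.pt.ExactAt n :=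
  colim.exact_mapShortComplex (S := (ShortComplex.functorEquivalence K C).inverse.obj
      (F ⋙ HomologicalComplex.shortComplexFunctor C _ n)) (exact_of_forall_exact_evaluation _ h)
    (isColimitOfPreserves (HomologicalComplex.eval C _ _) hc)
    (isColimitOfPreserves (HomologicalComplex.eval C _ _) hc)
    (isColimitOfPreserves (HomologicalComplex.eval C _ _) hc) _ _
    (fun k ↦ (c.ι.app k).comm _ _) (fun k ↦ (c.ι.app k).comm _ _)

variable [HasCoproducts.{t} C] [AB4OfSize.{t} C]

instance isClosedUnderColimitsOfShape_subcategoryAcyclic (J : Type t) :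
    (HomotopyCategory.subcategoryAcyclic C).IsClosedUnderColimitsOfShape (Discrete J) := by
  refine isClosedUnderColimitsOfShape_discrete fun X c hc hX ↦ ?_
  choose K hK using fun j ↦ HomotopyCategory.quotient_obj_surjective (X j)
  obtain rfl : X = fun j ↦ (HomotopyCategory.quotient C _).obj (K j) := funext fun j ↦ (hK j).symm
  have hK' := isColimitCofanMkObjOfIsColimit (HomotopyCategory.quotient C (ComplexShape.up ℤ)) _ _
    (coproductIsCoproduct K)
  refine (HomotopyCategory.subcategoryAcyclic C).prop_of_iso
    (IsColimit.coconePointUniqueUpToIso hK' hc)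
    ((HomotopyCategory.quotient_obj_mem_subcategoryAcyclic_iff_exactAt _).2 fun n ↦ ?_)
  exact exactAt_of_isColimit (colimit.isColimit _) n fun j ↦
    (HomotopyCategory.quotient_obj_mem_subcategoryAcyclic_iff_exactAt _).1 (hX j.as) n

variable [HasDerivedCategory.{w} C]

instance preservesColimitsOfShape_Qh (J : Type t) :
    PreservesColimitsOfShape (Discrete J) (Qh (C := C)) :=
  preservesColimitsOfShape_of_isLocalization (HomotopyCategory.subcategoryAcyclic C).trW _

instance hasCoproducts_derivedCategory : HasCoproducts.{t} (DerivedCategory C) :=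
  hasCoproducts_of_essSurj Qh

end Complexes

section CompactObjects

namespace IsCompactObject

variable {C : Type u₁} [Category.{v₁} C] [Preadditive C]
  {D : Type u₂} [Category.{v₂} D] [Preadditive D]

lemma of_injective (F : C ⥤ D) [F.Additive]
    [∀ J : Type t, PreservesColimitsOfShape (Discrete J) F] {M : D} (hM : IsCompactObject.{t} M)
    {Z : C} (e : M ⟶ F.obj Z)
    (he : ∀ Y : C, Function.Injective fun f : Z ⟶ Y ↦ e ≫ F.map f) : IsCompactObject.{t} Z := by
  intro J X c hc f
  obtain ⟨s, g, hg⟩ := hM J _ _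
    (Cofan.isColimitMapCoconeEquiv F X c (isColimitOfPreserves F hc)) (e ≫ F.map f)
  choose p hp hp' using exists_proj_of_isColimit hc
  have hg_proj (j) (hj : j ∈ s) : e ≫ F.map (f ≫ p j) = g j := by
    rw [F.map_comp, reassoc_of% hg, Preadditive.sum_comp, Finset.sum_eq_single_of_mem j hj]
    · simp [← F.map_comp, hp]
    · intro i _ hij
      simp [← F.map_comp, hp' j i hij]
  refine ⟨s, fun j ↦ f ≫ p j, he _ ?_⟩
  simp only [F.map_sum, Preadditive.comp_sum, F.map_comp _ (c.inj _)]
  rw [hg]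
  exact Finset.sum_congr rfl fun j hj ↦ by rw [← reassoc_of% hg_proj j hj]; rfl

lemma map_of_surjective (F : C ⥤ D) [F.Additive] [F.EssSurj] [HasCoproducts.{t} C]
    [∀ J : Type t, PreservesColimitsOfShape (Discrete J) F] {Z : C} (hZ : IsCompactObject.{t} Z)
    (hF : ∀ Y, Function.Surjective (F.map : (Z ⟶ Y) → _)) : IsCompactObject.{t} (F.obj Z) := by
  intro J X c hc f
  let e j := F.objObjPreimageIso (X j)
  let h := isColimitCofanMkObjOfIsColimit F _ _
    (coproductIsCoproduct fun j ↦ F.objPreimage (X j))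
  let i : c.pt ⟶ F.obj (∐ fun j ↦ F.objPreimage (X j)) :=
    Cofan.IsColimit.desc hc fun j ↦ (e j).inv ≫ F.map (Sigma.ι (fun j ↦ F.objPreimage (X j)) j)
  let i' : F.obj (∐ fun j ↦ F.objPreimage (X j)) ⟶ c.pt :=
    Cofan.IsColimit.desc h fun j ↦ (e j).hom ≫ c.inj j
  have hi' j : F.map (Sigma.ι (fun j ↦ F.objPreimage (X j)) j) ≫ i' = (e j).hom ≫ c.inj j :=
    Cofan.IsColimit.fac h _ j
  have hii' : i ≫ i' = 𝟙 c.pt := Cofan.IsColimit.hom_ext hc _ _ fun j ↦ by simp [i, hi']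
  obtain ⟨f', hf'⟩ := hF _ (f ≫ i)
  obtain ⟨s, g, hg⟩ := hZ _ _ _ (coproductIsCoproduct _) f'
  refine ⟨s, fun j ↦ F.map (g j) ≫ (e j).hom, ?_⟩
  calc f = F.map f' ≫ i' := by rw [hf', assoc, hii', comp_id]
    _ = _ := by simp [hg, F.map_sum, Preadditive.sum_comp, hi']

end IsCompactObject

lemma isCompactObject_self (R : Type v) [Ring R] : IsCompactObject.{t} (ModuleCat.of R R) := by
  classical
  intro J X c hc f
  let N : Submodule R c.pt := ⨆ j, LinearMap.range (c.inj j).hom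
  have hN : N = ⊤ := by
    have : ModuleCat.ofHom N.mkQ = 0 := Cofan.IsColimit.hom_ext hc _ _ fun j ↦ by
      ext x
      simpa using Submodule.mem_iSup_of_mem (p := fun j ↦ LinearMap.range (c.inj j).hom) j ⟨x, rfl⟩
    rw [← Submodule.ker_mkQ N, show N.mkQ = 0 from congrArg ModuleCat.Hom.hom this,
      LinearMap.ker_zero]
  obtain ⟨y, hy, hy_sum⟩ :=
    (Submodule.mem_iSup_iff_exists_finsupp _ _).1 (hN ▸ trivial : f.hom (1 : R) ∈ N)
  choose z hz using hy
  refine ⟨y.support, fun j ↦ ModuleCat.ofHom (LinearMap.toSpanSingleton R _ (z j)), ?_⟩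
  ext
  change f.hom (1 : R) = _
  rw [← hy_sum, ModuleCat.hom_sum, LinearMap.sum_apply, Finsupp.sum]
  exact Finset.sum_congr rfl fun j _ ↦ by simp [hz]

end CompactObjects

section Single

variable {C : Type u} [Category.{v} C] [Abelian C]

lemma isCompactObject_single [HasCoproducts.{t} C] {M : C} (hM : IsCompactObject.{t} M) (n : ℤ) :
    IsCompactObject.{t} ((HomologicalComplex.single C (ComplexShape.up ℤ) n).obj M) :=
  .of_injective (HomologicalComplex.eval C _ n) hM
    (HomologicalComplex.singleObjXSelf (ComplexShape.up ℤ) n M).inv fun _ _ _ h ↦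
      HomologicalComplex.from_single_hom_ext ((cancel_epi _).1 h)

lemma isCompactObject_quotient_single [HasCoproducts.{t} C] {M : C} (hM : IsCompactObject.{t} M)
    (n : ℤ) : IsCompactObject.{t} ((HomotopyCategory.quotient C (ComplexShape.up ℤ)).obj
      ((HomologicalComplex.single C (ComplexShape.up ℤ) n).obj M)) :=
  (isCompactObject_single hM n).map_of_surjective _ fun _ ↦ Functor.map_surjective _

instance isKProjective_single (P : C) [Projective P] (n : ℤ) : CochainComplex.IsKProjective
    ((HomologicalComplex.single C (ComplexShape.up ℤ) n).obj P) := by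
  have (m : ℤ) :
      Projective (((HomologicalComplex.single C (ComplexShape.up ℤ) n).obj P).X m) := by
    obtain rfl | h := eq_or_ne m n
    · exact .of_iso (HomologicalComplex.singleObjXSelf (ComplexShape.up ℤ) m P).symm inferInstance
    · exact (HomologicalComplex.isZero_single_obj_X (ComplexShape.up ℤ) n P m h).projective
  exact CochainComplex.isKProjective_of_projective _ n

lemma exact_of_isSeparator {P : C} (hP : IsSeparator P) (S : ShortComplex C)
    (h : ∀ x : P ⟶ S.X₂, x ≫ S.g = 0 → ∃ y : P ⟶ S.X₁, x = y ≫ S.f) : S.Exact := by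
  rw [S.exact_iff_epi_toCycles]
  refine Preadditive.epi_of_cancel_zero _ fun k hk ↦
    (Preadditive.isSeparator_iff P).1 hP k fun x ↦ ?_
  obtain ⟨y, hy⟩ := h (x ≫ S.iCycles) (by simp)
  obtain rfl : x = y ≫ S.toCycles := by simpa [← cancel_mono S.iCycles] using hy
  rw [assoc, hk, comp_zero]

lemma exists_comp_d_of_homotopy {M : C} {K : CochainComplex C ℤ} {m n : ℤ} (hmn : m + 1 = n)
    {x : M ⟶ K.X n} (hx : ∀ k, (ComplexShape.up ℤ).Rel n k → x ≫ K.d n k = 0)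
    (H : Homotopy (HomologicalComplex.mkHomFromSingle x hx) 0) :
    ∃ y : M ⟶ K.X m, x = y ≫ K.d m n := by
  let i := HomologicalComplex.singleObjXSelf (ComplexShape.up ℤ) n M
  refine ⟨i.inv ≫ H.hom n m, ?_⟩
  have hH := H.comm n
  rw [dNext_eq _ (ComplexShape.up_mk n (n + 1) rfl), prevD_eq _ (ComplexShape.up_mk m n hmn)] at hH
  simpa [i] using i.inv ≫= hH

lemma exactAt_of_forall_quotient_map_eq_zero {P : C} (hP : IsSeparator P)
    (K : CochainComplex C ℤ) (n : ℤ)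
    (h : ∀ f : (HomologicalComplex.single C (ComplexShape.up ℤ) n).obj P ⟶ K,
      (HomotopyCategory.quotient C (ComplexShape.up ℤ)).map f = 0) : K.ExactAt n := by
  rw [K.exactAt_iff' (n - 1) n (n + 1) (by simp) (by simp)]
  refine exact_of_isSeparator hP _ fun x hx ↦
    exists_comp_d_of_homotopy (sub_add_cancel n 1) (fun k hk ↦ ?_)
      (HomotopyCategory.homotopyOfEq _ 0 ((h _).trans (Functor.map_zero _ _ _).symm))
  obtain rfl : n + 1 = k := hk
  exact hx

variable [HasDerivedCategory.{w} C]

lemma isZero_Qh_obj {X : HomotopyCategory C (ComplexShape.up ℤ)}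
    (hX : HomotopyCategory.subcategoryAcyclic C X) : IsZero (Qh.obj X) := by
  have := Localization.inverts Qh (HomotopyCategory.subcategoryAcyclic C).trW _
    (⟨_, _, _, contractible_distinguished₁ X, hX⟩ :
      (HomotopyCategory.subcategoryAcyclic C).trW (0 : _ ⟶ X))
  exact (Qh.map_isZero (isZero_zero _)).of_iso (asIso (Qh.map (0 : _ ⟶ X))).symm

variable (P : C)

lemma Qh_map_bijective_single [Projective P] (n : ℤ)
    (K : HomotopyCategory C (ComplexShape.up ℤ)) :
    Function.Bijective (Qh.map : ((HomotopyCategory.quotient C (ComplexShape.up ℤ)).obj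
      ((HomologicalComplex.single C (ComplexShape.up ℤ) n).obj P) ⟶ K) → _) :=
  CochainComplex.IsKProjective.Qh_map_bijective _ K

lemma isCompactObject_singleFunctor [HasCoproducts.{t} C] [AB4OfSize.{t} C] [Projective P]
    (hP : IsCompactObject.{t} P) (n : ℤ) : IsCompactObject.{t} ((singleFunctor C n).obj P) :=
  (isCompactObject_quotient_single hP n).map_of_surjective Qh
    fun K ↦ (Qh_map_bijective_single P n K).surjective

lemma isZero_of_forall_singleFunctor_hom_eq_zero {P : C} [Projective P] (hP : IsSeparator P)
    {X : DerivedCategory C} (hX : ∀ (n : ℤ) (f : (singleFunctor C n).obj P ⟶ X), f = 0) :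
    IsZero X := by
  obtain ⟨K, hK⟩ := HomotopyCategory.quotient_obj_surjective (Qh.objPreimage X)
  have e : Qh.obj ((HomotopyCategory.quotient C _).obj K) ≅ X :=
    Qh.mapIso (eqToIso hK) ≪≫ Qh.objObjPreimageIso X
  refine (isZero_Qh_obj ?_).of_iso e.symm
  rw [HomotopyCategory.quotient_obj_mem_subcategoryAcyclic_iff_exactAt]
  refine fun n ↦ exactAt_of_forall_quotient_map_eq_zero hP K n fun f ↦
    (Qh_map_bijective_single P n _).injective ?_
  rw [Functor.map_zero, ← cancel_mono e.hom, zero_comp]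
  exact hX n _

/-- The shifts of a stalk complex in degree `0` are the stalk complexes in the other degrees. -/
noncomputable def shiftSingleFunctorIso (M : C) (n : ℤ) :
    ((singleFunctor C 0).obj M)⟦n⟧ ≅ (singleFunctor C (-n)).obj M :=
  ((singleFunctors C).shiftIso n (-n) 0 (by simp)).app M

lemma isTriangulatedGen_singleFunctor {P : C} [Projective P] (hP : IsSeparator P) :
    IsTriangulatedGen ((singleFunctor C 0).obj P) := by
  intro X hX
  contrapose! hX
  refine isZero_of_forall_singleFunctor_hom_eq_zero hP fun n f ↦ ?_
  obtain ⟨m, rfl⟩ := neg_surjective n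
  rw [← cancel_epi (shiftSingleFunctorIso P m).hom, comp_zero]
  exact hX m _

lemma small_singleFunctor_hom [Projective P] (n : ℤ) (X : DerivedCategory C) :
    Small.{v} ((singleFunctor C n).obj P ⟶ X) := by
  obtain ⟨K, hK⟩ := HomotopyCategory.quotient_obj_surjective (Qh.objPreimage X)
  have e : Qh.obj ((HomotopyCategory.quotient C _).obj K) ≅ X :=
    Qh.mapIso (eqToIso hK) ≪≫ Qh.objObjPreimageIso X
  exact small_of_surjective ((e.homToEquiv.surjective.comp
    (Qh_map_bijective_single P n _).surjective).comp (Functor.map_surjective _))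

theorem isEquivalence_ι_comp_Qh [HasCoproducts.{v} C] [AB4OfSize.{v} C] {P : C} [Projective P]
    (hP : IsSeparator P) (hP' : IsCompactObject.{v} P) :
    ((localizingSubcategory.{v} ((HomotopyCategory.singleFunctor C 0).obj P)).ι ⋙
      Qh).IsEquivalence :=
  isEquivalence_ι_comp_of_compact_generator Qh (isCompactObject_quotient_single hP' 0)
    (isCompactObject_singleFunctor P hP' 0) (fun _ ↦ Qh_map_bijective_single P 0 _)
    (isTriangulatedGen_singleFunctor hP) fun X n ↦
      have := small_singleFunctor_hom P (-n) X
      small_map ((shiftSingleFunctorIso P n).homCongr (.refl X))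

end Single

instance projective_self (R : Type v) [Ring R] : Projective (ModuleCat.of R R) :=
  (IsProjective.iff_projective R).1 inferInstance

lemma isSeparator_self (R : Type v) [Ring R] : IsSeparator (ModuleCat.of R R) :=
  (Preadditive.isSeparator_iff _).2 fun _ _ f hf ↦ by
    ext x
    simpa using ConcreteCategory.congr_hom
      (hf (ModuleCat.ofHom (LinearMap.toSpanSingleton R _ x))) (1 : R)

section Functors

variable {C : Type u₁} [Category.{v₁} C] {D : Type u₂} [Category.{v₂} D]

lemma map_bijective_of_natIso {F G : C ⥤ D} (α : F ≅ G) {X Y : C}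
    (h : Function.Bijective (F.map : (X ⟶ Y) → _)) : Function.Bijective (G.map : (X ⟶ Y) → _) := by
  have : (G.map : (X ⟶ Y) → _) = (α.app X).homCongr (α.app Y) ∘ F.map := by
    ext f
    simp [Iso.homCongr_apply]
  exact this ▸ ((α.app X).homCongr (α.app Y)).bijective.comp h

lemma map_bijective_of_isIso_unit_app {L : C ⥤ D} {R : D ⥤ C} (adj : L ⊣ R) (X Y : C)
    [IsIso (adj.unit.app Y)] : Function.Bijective (L.map : (X ⟶ Y) → _) := by
  have : adj.homEquiv X (L.obj Y) ∘ L.map = fun f ↦ f ≫ adj.unit.app Y := by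
    ext f
    simp [Adjunction.homEquiv_unit]
  rw [← (adj.homEquiv X (L.obj Y)).comp_bijective, this]
  exact ((asIso (adj.unit.app Y)).homToEquiv (Z := X)).bijective

lemma isIso_unit_app_of_isIso_homEquiv_symm {L : C ⥤ D} {R : D ⥤ C} (adj : L ⊣ R) {X : C} {Y : D}
    (f : X ⟶ R.obj Y) [IsIso f] [IsIso ((adj.homEquiv X Y).symm f)] : IsIso (adj.unit.app X) := by
  have fac : adj.unit.app X ≫ R.map ((adj.homEquiv X Y).symm f) = f :=
    (adj.homEquiv_unit ..).symm.trans (Equiv.apply_symm_apply _ _)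
  exact IsIso.of_isIso_fac_right fac

lemma preservesColimitsOfShape_of_essSurj_comp {E : Type u₃} [Category.{v₃} E] {J : Type t}
    [HasColimitsOfShape (Discrete J) C] (L : C ⥤ D) [L.EssSurj]
    [PreservesColimitsOfShape (Discrete J) L] (F : D ⥤ E)
    [PreservesColimitsOfShape (Discrete J) (L ⋙ F)] : PreservesColimitsOfShape (Discrete J) F :=
  have (X : J → D) : PreservesColimit (Discrete.functor X) F := by
    let e : Discrete.functor (fun j ↦ L.obj (L.objPreimage (X j))) ≅ Discrete.functor X :=
      Discrete.natIso fun j ↦ L.objObjPreimageIso (X j.as)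
    have : PreservesColimit (Discrete.functor fun j ↦ L.obj (L.objPreimage (X j))) F :=
      preservesColimit_of_preserves_colimit_cocone
        (isColimitCofanMkObjOfIsColimit L _ _ (coproductIsCoproduct fun j ↦ L.objPreimage (X j)))
        ((isColimitMapCoconeCofanMkEquiv F _ _).symm
          (isColimitCofanMkObjOfIsColimit (L ⋙ F) _ _ (coproductIsCoproduct _)))
    exact preservesColimit_of_iso_diagram F e
  preservesColimitsOfShape_of_discrete F

instance preservesColimitsOfShape_mapHomotopyCategory [Abelian C] [Abelian D] (F : C ⥤ D)
    [F.Additive] (J : Type t) [HasColimitsOfShape (Discrete J) C]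
    [HasColimitsOfShape (Discrete J) D] [PreservesColimitsOfShape (Discrete J) F] :
    PreservesColimitsOfShape (Discrete J) (F.mapHomotopyCategory (ComplexShape.up ℤ)) := by
  have : PreservesColimitsOfShape (Discrete J) (HomotopyCategory.quotient C (ComplexShape.up ℤ) ⋙
      F.mapHomotopyCategory (ComplexShape.up ℤ)) :=
    preservesColimitsOfShape_of_natIso (F.mapHomotopyCategoryFactors (ComplexShape.up ℤ)).symm
  exact preservesColimitsOfShape_of_essSurj_comp (HomotopyCategory.quotient C _) _

end Functors

section TensorObj

open IsGrothendieckAbelian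

/-- The regular module corepresents the underlying set, by evaluation at `1`. -/
def regularModuleHomEquiv {R : Type v₁} [Ring R] (M : ModuleCat.{v₁} R) :
    (ModuleCat.of R R ⟶ M) ≃ M :=
  ModuleCat.homEquiv.trans (LinearMap.ringLmapEquivSelf R ℕ M).toEquiv

variable {G : Type u} [Category.{v} G] [Abelian G]

/-- The module `Hom(T, T)` over `(End T)ᵐᵒᵖ` is the regular one. -/
def regularModuleIso (T : G) :
    ModuleCat.of (End T)ᵐᵒᵖ (End T)ᵐᵒᵖ ≅ (preadditiveCoyonedaObj T).obj T :=
  LinearEquiv.toModuleIso (X₂ := (T ⟶ T))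
    { (MulOpposite.opAddEquiv (α := End T)).symm with map_smul' := fun _ _ ↦ rfl }

variable [IsGrothendieckAbelian.{v} G] (T : G)

instance additive_tensorObj : (tensorObj T).Additive :=
  (tensorObjPreadditiveCoyonedaObjAdjunction T).left_adjoint_additive

lemma isIso_homEquiv_symm_regularModuleIso :
    IsIso (((tensorObjPreadditiveCoyonedaObjAdjunction T).homEquiv _ T).symm
      (regularModuleIso T).hom) := by
  let adj := tensorObjPreadditiveCoyonedaObjAdjunction T
  refine isIso_of_coyoneda_map_bijective _ fun Y ↦ ?_
  let e : ((tensorObj T).obj (ModuleCat.of (End T)ᵐᵒᵖ (End T)ᵐᵒᵖ) ⟶ Y) ≃ (T ⟶ Y) :=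
    (adj.homEquiv _ Y).trans (regularModuleHomEquiv ((preadditiveCoyonedaObj T).obj Y))
  suffices h : (fun g ↦ (adj.homEquiv _ T).symm (regularModuleIso T).hom ≫ g) = e.symm from
    h ▸ e.symm.bijective
  ext g
  refine e.eq_symm_apply.2 ?_
  change (adj.homEquiv _ Y ((adj.homEquiv _ T).symm (regularModuleIso T).hom ≫ g)).hom
    (1 : (End T)ᵐᵒᵖ) = g
  rw [adj.homEquiv_naturality_right, Equiv.apply_symm_apply]
  exact id_comp g

/-- The canonical isomorphism `R ⊗ T ≅ T` for `R = End T`. -/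
noncomputable def tensorObjRegularIso :
    (tensorObj T).obj (ModuleCat.of (End T)ᵐᵒᵖ (End T)ᵐᵒᵖ) ≅ T :=
  have := isIso_homEquiv_symm_regularModuleIso T
  asIso (((tensorObjPreadditiveCoyonedaObjAdjunction T).homEquiv _ T).symm
    (regularModuleIso T).hom)

lemma tensorObj_map_bijective (M : ModuleCat.{v} (End T)ᵐᵒᵖ) : Function.Bijective
    ((tensorObj T).map : (M ⟶ ModuleCat.of (End T)ᵐᵒᵖ (End T)ᵐᵒᵖ) → _) :=
  have := isIso_homEquiv_symm_regularModuleIso T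
  have := isIso_unit_app_of_isIso_homEquiv_symm (tensorObjPreadditiveCoyonedaObjAdjunction T)
    (regularModuleIso T).hom
  map_bijective_of_isIso_unit_app (tensorObjPreadditiveCoyonedaObjAdjunction T) _ _

end TensorObj

section GeneratorIso

variable {C : Type u₁} [Category.{v₁} C] [Preadditive C] [HasShift C ℤ]

lemma isTriangulatedGen_of_iso {Z Z' : C} (e : Z ≅ Z') (hZ : IsTriangulatedGen Z) :
    IsTriangulatedGen Z' := by
  intro X hX
  obtain ⟨n, f, hf⟩ := hZ X hX
  exact ⟨n, e.inv⟦n⟧' ≫ f, fun h ↦ hf ((cancel_epi (e.inv⟦n⟧')).1 (h.trans comp_zero.symm))⟩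

end GeneratorIso

section RigidStalks

variable {C : Type u} [Category.{v} C] [Abelian C] [HasDerivedCategory.{w} C] {T : C}

lemma subsingleton_singleFunctor_hom
    (hT : ∀ i : ℕ, 0 < i →
      Subsingleton ((singleFunctor C 0).obj T ⟶ ((singleFunctor C 0).obj T)⟦(i : ℤ)⟧))
    {m : ℤ} (hm : m ≠ 0) :
    Subsingleton ((singleFunctor C 0).obj T ⟶ (singleFunctor C m).obj T) := by
  obtain hm | hm := hm.lt_or_gt
  · obtain ⟨i, rfl⟩ := Int.exists_eq_neg_ofNat hm.le
    have := hT i (by lia)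
    exact (shiftSingleFunctorIso T (i : ℤ)).symm.homToEquiv.subsingleton
  · exact ⟨fun f g ↦ (TStructure.t.zero f 0 m hm).trans (TStructure.t.zero g 0 m hm).symm⟩

end RigidStalks

section Transfer

variable {C : Type u} [Category.{v} C] [Abelian C] {D : Type u₂} [Category.{v₂} D] [Abelian D]
  [HasDerivedCategory.{w} D] (F : C ⥤ D) [F.Additive]

/-- On stalk complexes, applying `F` termwise is applying `F`. -/
noncomputable def singleFunctorMapIso (n : ℤ) :
    HomotopyCategory.singleFunctor C n ⋙ F.mapHomotopyCategory (ComplexShape.up ℤ) ⋙ Qh ≅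
      F ⋙ singleFunctor D n :=
  Functor.isoWhiskerRight (HomologicalComplex.singleMapHomologicalComplex F (ComplexShape.up ℤ) n)
    (HomotopyCategory.quotient _ _ ⋙ Qh)

variable {P : C}

lemma subsingleton_singleFunctor_hom_homotopyCategory (X Y : C) {m : ℤ} (hm : m ≠ 0) :
    Subsingleton ((HomotopyCategory.singleFunctor C 0).obj X ⟶
      (HomotopyCategory.singleFunctor C m).obj Y) :=
  have : Subsingleton ((CochainComplex.singleFunctor C 0).obj X ⟶
      (CochainComplex.singleFunctor C m).obj Y) :=
    ⟨fun _ _ ↦ HomologicalComplex.from_single_hom_ext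
      ((HomologicalComplex.isZero_single_obj_X (ComplexShape.up ℤ) m _ 0 hm.symm).eq_of_tgt _ _)⟩
  (HomotopyCategory.quotient C (ComplexShape.up ℤ)).map_surjective.subsingleton

lemma bijectiveOnGradedHom_singleFunctor (hF : Function.Bijective (F.map : (P ⟶ P) → _))
    (hT : ∀ i : ℕ, 0 < i → Subsingleton
      ((singleFunctor D 0).obj (F.obj P) ⟶ ((singleFunctor D 0).obj (F.obj P))⟦(i : ℤ)⟧)) :
    BijectiveOnGradedHom (F.mapHomotopyCategory (ComplexShape.up ℤ) ⋙ Qh)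
      ((HomotopyCategory.singleFunctor C 0).obj P)
      ((HomotopyCategory.singleFunctor C 0).obj P) := by
  refine fun n ↦ map_bijective_of_iso (X := (HomotopyCategory.singleFunctor C 0).obj P)
    (Y := (HomotopyCategory.singleFunctor C (-n)).obj P) ?_ (Iso.refl _)
    (((HomotopyCategory.singleFunctors C).shiftIso n (-n) 0 (by simp)).app P).symm
  obtain rfl | hn := eq_or_ne n 0
  · let singleD := Functor.FullyFaithful.ofFullyFaithful (singleFunctor D 0)
    have bijective : Function.Bijective ((F.mapHomotopyCategory (ComplexShape.up ℤ) ⋙ Qh).map ∘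
        (HomotopyCategory.singleFunctor C 0).map : (P ⟶ P) → _) :=
      map_bijective_of_natIso (singleFunctorMapIso F 0).symm
        ((singleD.map_bijective _ _).comp hF)
    have : (HomotopyCategory.singleFunctor C 0).Full :=
      inferInstanceAs (CochainComplex.singleFunctor C 0 ⋙ HomotopyCategory.quotient _ _).Full
    exact ⟨bijective.injective.of_comp_right (HomotopyCategory.singleFunctor C 0).map_surjective,
      bijective.surjective.of_comp⟩
  · have := subsingleton_singleFunctor_hom_homotopyCategory P P (neg_ne_zero.2 hn)
    have : Subsingleton ((F.mapHomotopyCategory (ComplexShape.up ℤ) ⋙ Qh).obj _ ⟶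
        (F.mapHomotopyCategory (ComplexShape.up ℤ) ⋙ Qh).obj _) :=
      (((singleFunctorMapIso F 0).app P).homCongr
        ((singleFunctorMapIso F (-n)).app P)).subsingleton_congr.2
          (subsingleton_singleFunctor_hom hT (neg_ne_zero.2 hn))
    exact ⟨Function.injective_of_subsingleton _, fun g ↦ ⟨0, Subsingleton.elim _ _⟩⟩

theorem isEquivalence_ι_comp_mapHomotopyCategory [HasCoproducts.{v} C] [HasCoproducts.{v} D]
    [AB4OfSize.{v} D] [∀ J : Type v, PreservesColimitsOfShape (Discrete J) F]
    (hP : IsCompactObject.{v} P) (hF : Function.Bijective (F.map : (P ⟶ P) → _))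
    (hT : ∀ i : ℕ, 0 < i → Subsingleton
      ((singleFunctor D 0).obj (F.obj P) ⟶ ((singleFunctor D 0).obj (F.obj P))⟦(i : ℤ)⟧))
    (hFP : IsCompactObject.{v} ((singleFunctor D 0).obj (F.obj P)))
    (hgen : IsTriangulatedGen ((singleFunctor D 0).obj (F.obj P)))
    (hs : ∀ (X : DerivedCategory D) (n : ℤ),
      Small.{v} (((singleFunctor D 0).obj (F.obj P))⟦n⟧ ⟶ X)) :
    ((localizingSubcategory.{v} ((HomotopyCategory.singleFunctor C 0).obj P)).ι ⋙
      F.mapHomotopyCategory (ComplexShape.up ℤ) ⋙ Qh).IsEquivalence := by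
  let e : (F.mapHomotopyCategory (ComplexShape.up ℤ) ⋙ Qh).obj
      ((HomotopyCategory.singleFunctor C 0).obj P) ≅ (singleFunctor D 0).obj (F.obj P) :=
    (singleFunctorMapIso F 0).app P
  exact isEquivalence_ι_comp_of_compact_generator _ (isCompactObject_quotient_single hP 0)
    (.of_iso e.symm hFP) (bijectiveOnGradedHom_singleFunctor F hF hT)
    (isTriangulatedGen_of_iso e.symm hgen)
    fun X n ↦ have := hs X n; small_map (((shiftFunctor _ n).mapIso e).homCongr (.refl X))

end Transfer

section TriangleEquivalence

variable {C : Type u₁} [Category.{v₁} C] [Preadditive C] [HasZeroObject C] [HasShift C ℤ]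
  [∀ n : ℤ, (shiftFunctor C n).Additive] [Pretriangulated C]
  {D : Type u₂} [Category.{v₂} D] [Preadditive D] [HasZeroObject D] [HasShift D ℤ]
  [∀ n : ℤ, (shiftFunctor D n).Additive] [Pretriangulated D]
  {E : Type u₃} [Category.{v₃} E] [Preadditive E] [HasZeroObject E] [HasShift E ℤ]
  [∀ n : ℤ, (shiftFunctor E n).Additive] [Pretriangulated E]

lemma exists_triangleEquivalenceData_of_span (F₁ : C ⥤ D) [F₁.CommShift ℤ] [F₁.IsTriangulated]
    [F₁.IsEquivalence] (F₂ : C ⥤ E) [F₂.CommShift ℤ] [F₂.IsTriangulated] [F₂.IsEquivalence]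
    (Z : C) :
    ∃ e : TriangleEquivalenceData D E, Nonempty (e.functor.obj (F₁.obj Z) ≅ F₂.obj Z) := by
  let adj : F₁ ⊣ F₁.inv := F₁.asEquivalence.toAdjunction
  let := adj.rightAdjointCommShift ℤ
  have := adj.commShift_of_leftAdjoint ℤ
  have : F₁.inv.IsTriangulated := adj.isTriangulated_rightAdjoint
  exact ⟨⟨F₁.inv ⋙ F₂, inferInstance, inferInstance, inferInstance⟩,
    ⟨F₂.mapIso (F₁.asEquivalence.unitIso.app Z).symm⟩⟩

end TriangleEquivalence

section TiltingEquivalence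

open IsGrothendieckAbelian

variable {G : Type u} [Category.{v} G] [Abelian G] [IsGrothendieckAbelian.{v} G]
  [HasDerivedCategory.{w} G] {T : G} [HasDerivedCategory.{w'} (ModuleCat.{v} (End T)ᵐᵒᵖ)]

theorem exists_triangleEquivalenceData_moduleCat
    (hT : ∀ i : ℕ, 0 < i →
      Subsingleton ((singleFunctor G 0).obj T ⟶ ((singleFunctor G 0).obj T)⟦(i : ℤ)⟧))
    (hc : IsCompactObject.{v} ((singleFunctor G 0).obj T))
    (hgen : IsTriangulatedGen ((singleFunctor G 0).obj T))
    (hs : ∀ (X : DerivedCategory G) (n : ℤ), Small.{v} (((singleFunctor G 0).obj T)⟦n⟧ ⟶ X)) :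
    ∃ E : TriangleEquivalenceData (DerivedCategory G)
        (DerivedCategory (ModuleCat.{v} (End T)ᵐᵒᵖ)),
      Nonempty (E.functor.obj ((singleFunctor G 0).obj T) ≅
        (singleFunctor (ModuleCat.{v} (End T)ᵐᵒᵖ) 0).obj
          (ModuleCat.of (End T)ᵐᵒᵖ (End T)ᵐᵒᵖ)) := by
  have : HasFiniteBiproducts G := Abelian.hasFiniteBiproducts
  have : AB4OfSize.{v} G := AB4.of_AB5 G
  let R := (HomotopyCategory.singleFunctor _ 0).obj (ModuleCat.of (End T)ᵐᵒᵖ (End T)ᵐᵒᵖ)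
  let e := (singleFunctor G 0).mapIso (tensorObjRegularIso T)
  have hTensor := isEquivalence_ι_comp_mapHomotopyCategory (tensorObj T) (isCompactObject_self _)
    (tensorObj_map_bijective T _) (fun i hi ↦
      have := hT i hi
      (e.homCongr ((shiftFunctor _ (i : ℤ)).mapIso e)).subsingleton)
    (.of_iso e.symm hc) (isTriangulatedGen_of_iso e.symm hgen)
    fun X n ↦ have := hs X n; small_map (((shiftFunctor _ n).mapIso e).homCongr (.refl X))
  have hLocalization := isEquivalence_ι_comp_Qh (isSeparator_self (End T)ᵐᵒᵖ)
    (isCompactObject_self (End T)ᵐᵒᵖ)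
  obtain ⟨E, ⟨e'⟩⟩ := exists_triangleEquivalenceData_of_span
    ((localizingSubcategory.{v} R).ι ⋙ (tensorObj T).mapHomotopyCategory _ ⋙ Qh)
    ((localizingSubcategory.{v} R).ι ⋙ Qh) ⟨R, localizingSubcategory_self R⟩
  exact ⟨E, ⟨E.functor.mapIso (((singleFunctorMapIso (tensorObj T) 0).app _) ≪≫ e).symm ≪≫ e'⟩⟩

end TiltingEquivalence

section SmallHoms

variable {C : Type u₁} [Category.{v₁} C] [Preadditive C]

lemma small_hom_of_isColimit {Z : C} (hZ : IsCompactObject.{t} Z) {J : Type t} {X : J → C}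
    {c : Cofan X} (hc : IsColimit c) (hX : ∀ j, Small.{t} (Z ⟶ X j)) : Small.{t} (Z ⟶ c.pt) :=
  small_of_surjective
    (f := fun x : Finset J × (∀ j, Z ⟶ X j) ↦ ∑ j ∈ x.1, x.2 j ≫ c.inj j) fun f ↦ by
    obtain ⟨s, g, hf⟩ := hZ J X c hc f
    exact ⟨⟨s, g⟩, hf.symm⟩

lemma small_hom_obj₂ [HasZeroObject C] [HasShift C ℤ] [∀ n : ℤ, (shiftFunctor C n).Additive]
    [Pretriangulated C] {T : Triangle C} (hT : T ∈ distTriang C) {Z : C}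
    [Small.{t} (Z ⟶ T.obj₁)] [Small.{t} (Z ⟶ T.obj₃)] : Small.{t} (Z ⟶ T.obj₂) := by
  let imageLift (x : Set.range fun f : Z ⟶ T.obj₂ ↦ f ≫ T.mor₂) : Z ⟶ T.obj₂ := x.2.choose
  refine small_of_surjective (f := fun x : (Set.range fun f : Z ⟶ T.obj₂ ↦ f ≫ T.mor₂) ×
    (Z ⟶ T.obj₁) ↦ imageLift x.1 + x.2 ≫ T.mor₁) fun f ↦ ?_
  let x : Set.range fun f : Z ⟶ T.obj₂ ↦ f ≫ T.mor₂ := ⟨f ≫ T.mor₂, f, rfl⟩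
  have hx : imageLift x ≫ T.mor₂ = f ≫ T.mor₂ := x.2.choose_spec
  obtain ⟨g, hg⟩ := Triangle.coyoneda_exact₂ T hT (f - imageLift x)
    (by rw [Preadditive.sub_comp, hx, sub_self])
  exact ⟨⟨x, g⟩, (add_eq_of_eq_sub' hg.symm)⟩

end SmallHoms

section ZeroDifferential

variable {C : Type u₁} [Category.{v₁} C] [Abelian C]

/-- The cochain complex with terms `X n` and zero differential. -/
def zeroDifferentialComplex (X : ℤ → C) : CochainComplex C ℤ where
  X := X
  d _ _ := 0

/-- The inclusions of the stalks of `zeroDifferentialComplex X`, as a cofan. -/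
noncomputable def zeroDifferentialCofan (X : ℤ → C) :
    Cofan fun n : ULift.{t} ℤ ↦ (CochainComplex.singleFunctor C n.down).obj (X n.down) :=
  Cofan.mk (zeroDifferentialComplex X) fun n ↦
    HomologicalComplex.mkHomFromSingle (𝟙 (X n.down)) fun _ _ ↦ comp_zero

lemma nonempty_isColimit_zeroDifferentialCofan (X : ℤ → C) :
    Nonempty (IsColimit (zeroDifferentialCofan.{t} X)) := by
  rw [nonempty_isColimit_cofan_iff]
  intro W f
  have inj_f (n : ℤ) : ((zeroDifferentialCofan.{t} X).inj ⟨n⟩).f n =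
      (HomologicalComplex.singleObjXSelf (ComplexShape.up ℤ) n (X n)).hom :=
    (HomologicalComplex.mkHomFromSingle_f (K := zeroDifferentialComplex X) _
      fun _ _ ↦ comp_zero).trans (comp_id _)
  have comp_d (i j : ℤ) : (f ⟨i⟩).f i ≫ W.d i j = 0 := by
    rw [(f ⟨i⟩).comm]
    exact (congrArg (· ≫ _) (HomologicalComplex.single_obj_d ..)).trans zero_comp
  refine ⟨{
    f n := (HomologicalComplex.singleObjXSelf (ComplexShape.up ℤ) n (X n)).inv ≫ (f ⟨n⟩).f n
    comm' i j _ := (assoc _ _ _).trans <|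
      (congrArg (_ ≫ ·) (comp_d i j)).trans (comp_zero.trans zero_comp.symm) },
    fun n ↦ ?_, fun g hg ↦ ?_⟩
  · refine HomologicalComplex.from_single_hom_ext ?_
    exact (congrArg (· ≫ _) (inj_f n.down)).trans (Iso.hom_inv_id_assoc _ _)
  · ext n
    have hf : (f ⟨n⟩).f n =
        (HomologicalComplex.singleObjXSelf (ComplexShape.up ℤ) n (X n)).hom ≫ g.f n := by
      rw [← hg ⟨n⟩, HomologicalComplex.comp_f, inj_f]
      rfl
    exact (Iso.inv_comp_eq _).2 hf |>.symm

lemma d_comp_cokernel_π_iCycles (K : CochainComplex C ℤ) (i j : ℤ) :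
    K.d i j ≫ cokernel.π (K.iCycles j) = 0 := by
  rw [← K.toCycles_i i j, assoc, cokernel.condition, comp_zero]

/-- The short exact sequence `0 ⟶ Z(K) ⟶ K ⟶ K / Z(K) ⟶ 0`, whose outer terms have zero
differential. -/
noncomputable def cyclesShortComplex (K : CochainComplex C ℤ) :
    ShortComplex (CochainComplex C ℤ) where
  X₁ := zeroDifferentialComplex fun n ↦ K.cycles n
  X₂ := K
  X₃ := zeroDifferentialComplex fun n ↦ cokernel (K.iCycles n)
  f := { f := fun n ↦ K.iCycles n, comm' := fun i j _ ↦ (K.iCycles_d i j).trans zero_comp.symm }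
  g :=
    { f := fun n ↦ cokernel.π (K.iCycles n)
      comm' := fun i j _ ↦ comp_zero.trans (d_comp_cokernel_π_iCycles K i j).symm }
  zero := by
    ext n
    exact cokernel.condition _

lemma cyclesShortComplex_shortExact (K : CochainComplex C ℤ) :
    (cyclesShortComplex K).ShortExact :=
  HomologicalComplex.shortExact_of_degreewise_shortExact _ fun n ↦
    { exact := ShortComplex.exact_of_g_is_cokernel _ (cokernelIsCokernel (K.iCycles n))
      mono_f := inferInstanceAs (Mono (K.iCycles n))
      epi_g := inferInstanceAs (Epi (cokernel.π (K.iCycles n))) }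

variable [HasCoproducts.{t} C] [AB4OfSize.{t} C] [HasDerivedCategory.{w} C]

lemma small_hom_Q_zeroDifferentialComplex {Z : DerivedCategory C} (hZ : IsCompactObject.{t} Z)
    (hsingle : ∀ (M : C) (n : ℤ), Small.{t} (Z ⟶ (singleFunctor C n).obj M)) (X : ℤ → C) :
    Small.{t} (Z ⟶ Q.obj (zeroDifferentialComplex X)) := by
  obtain ⟨hc⟩ := nonempty_isColimit_zeroDifferentialCofan.{t} X
  exact small_hom_of_isColimit hZ (isColimitCofanMkObjOfIsColimit
    (HomotopyCategory.quotient C (ComplexShape.up ℤ) ⋙ Qh) _ _ hc) fun n ↦ hsingle _ n.down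

lemma small_hom_of_isCompactObject {Z : DerivedCategory C} (hZ : IsCompactObject.{t} Z)
    (hsingle : ∀ (M : C) (n : ℤ), Small.{t} (Z ⟶ (singleFunctor C n).obj M))
    (X : DerivedCategory C) : Small.{t} (Z ⟶ X) := by
  let K := Q.objPreimage X
  have : Small.{t} (Z ⟶ (triangleOfSES (cyclesShortComplex_shortExact K)).obj₁) :=
    small_hom_Q_zeroDifferentialComplex hZ hsingle _
  have : Small.{t} (Z ⟶ (triangleOfSES (cyclesShortComplex_shortExact K)).obj₃) :=
    small_hom_Q_zeroDifferentialComplex hZ hsingle _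
  have : Small.{t} (Z ⟶ Q.obj K) :=
    small_hom_obj₂ (triangleOfSES_distinguished (cyclesShortComplex_shortExact K))
  exact small_map (Q.objObjPreimageIso X).symm.homToEquiv

end ZeroDifferential

section Universes

variable {C : Type u₁} [Category.{v₁} C] [Preadditive C]

lemma exists_eq_sum_of_embedding {J : Type t} {X : J → C} {c : Cofan X} (hc : IsColimit c)
    {J' : Type t'} (e : J' ↪ J) {Z : C} (s : Finset J') (g : ∀ j, Z ⟶ X (e j)) :
    ∃ (s' : Finset J) (g' : ∀ j, Z ⟶ X j),
      ∑ j ∈ s, g j ≫ c.inj (e j) = ∑ j ∈ s', g' j ≫ c.inj j := by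
  choose p hp hp' using exists_proj_of_isColimit hc
  refine ⟨s.map e, fun j ↦ (∑ i ∈ s, g i ≫ c.inj (e i)) ≫ p j, ?_⟩
  rw [Finset.sum_map]
  refine Finset.sum_congr rfl fun j hj ↦ ?_
  suffices h : (∑ i ∈ s, g i ≫ c.inj (e i)) ≫ p (e j) = g j from
    congrArg (· ≫ c.inj (e j)) h.symm
  rw [Preadditive.sum_comp, Finset.sum_eq_single_of_mem j hj fun i _ hij ↦ ?_, assoc, hp, comp_id]
  rw [assoc, hp' _ _ (e.injective.ne hij), comp_zero]

lemma IsCompactObject.exists_eq_sum_of_small {Z : C} (hZ : IsCompactObject.{t} Z) {J : Type t'}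
    [Small.{t} J] {X : J → C} {c : Cofan X} (hc : IsColimit c) (f : Z ⟶ c.pt) :
    ∃ (s : Finset J) (g : ∀ j, Z ⟶ X j), f = ∑ j ∈ s, g j ≫ c.inj j := by
  let e := (equivShrink.{t} J).symm
  obtain ⟨s, g, hf⟩ := hZ _ _ _ (Cofan.isColimitEquivOfEquiv e c hc) f
  obtain ⟨s', g', h⟩ := exists_eq_sum_of_embedding hc e.toEmbedding s g
  exact ⟨s', g', hf.trans h⟩

lemma exists_sumAddHom_eq_iff {J : Type t} [DecidableEq J] {X : J → C} {A Z : C}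
    (φ : ∀ j, X j ⟶ A) (f : Z ⟶ A) :
    (∃ x, DFinsupp.sumAddHom (fun j ↦ Preadditive.rightComp Z (φ j)) x = f) ↔
      ∃ (s : Finset J) (g : ∀ j, Z ⟶ X j), f = ∑ j ∈ s, g j ≫ φ j := by
  classical
  refine ⟨?_, ?_⟩
  · rintro ⟨x, rfl⟩
    exact ⟨x.support, x, DFinsupp.sumAddHom_apply _ _⟩
  · rintro ⟨s, g, rfl⟩
    refine ⟨∑ j ∈ s, DFinsupp.single j (g j), ?_⟩
    simp only [map_sum, DFinsupp.sumAddHom_single]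
    rfl

lemma sumAddHom_rightComp_injective {J : Type t} [DecidableEq J] {X : J → C} {c : Cofan X}
    (hc : IsColimit c) (Z : C) : Function.Injective
      (DFinsupp.sumAddHom fun j ↦ Preadditive.rightComp Z (c.inj j)) := by
  choose p hp hp' using exists_proj_of_isColimit hc
  have sum_comp_p (j : J) : (Preadditive.rightComp Z (p j)).comp
      (DFinsupp.sumAddHom fun i ↦ Preadditive.rightComp Z (c.inj i)) =
        DFinsupp.evalAddMonoidHom j := by
    refine DFinsupp.addHom_ext fun i g ↦ ?_
    obtain rfl | hij := eq_or_ne i j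
    · simp [Preadditive.rightComp, hp, DFinsupp.evalAddMonoidHom]
    · simp [Preadditive.rightComp, hp' _ _ hij, DFinsupp.evalAddMonoidHom, hij]
  intro x y hxy
  ext j
  exact (DFunLike.congr_fun (sum_comp_p j) x).symm.trans
    ((congrArg (· ≫ p j) hxy).trans (DFunLike.congr_fun (sum_comp_p j) y))

lemma isCompactObj_iff {Z : C} : IsCompactObj Z ↔ IsCompactObject.{v₁} Z := by
  classical
  refine ⟨fun hZ J X c hc f ↦ ?_, fun hZ J X _ ↦ ⟨?_, fun f ↦ ?_⟩⟩
  · have : HasCoproduct X := ⟨_, hc⟩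
    let i : c.pt ≅ ∐ X := IsColimit.coconePointUniqueUpToIso hc (coproductIsCoproduct X)
    obtain ⟨s, g, hf⟩ := (exists_sumAddHom_eq_iff (Sigma.ι X) (f ≫ i.hom)).1 ((hZ X).2 _)
    refine ⟨s, g, ?_⟩
    rw [← cancel_mono i.hom, hf, Preadditive.sum_comp]
    refine Finset.sum_congr rfl fun j _ ↦ ?_
    rw [assoc]
    exact congrArg (g j ≫ ·) (IsColimit.comp_coconePointUniqueUpToIso_hom hc _ ⟨j⟩).symm
  · exact sumAddHom_rightComp_injective (coproductIsCoproduct X) Z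
  · exact (exists_sumAddHom_eq_iff (Sigma.ι X) f).2 (hZ J X _ (coproductIsCoproduct X) f)

lemma small_of_cofan_const {Z : C} (hZ : 𝟙 Z ≠ 0) {J : Type t} {c : Cofan fun _ : J ↦ Z}
    (hc : IsColimit c) : Small.{v₁} J := by
  choose p hp hp' using exists_proj_of_isColimit hc
  refine small_of_injective (f := p) fun i j hij ↦ by_contra fun hne ↦ hZ ?_
  rw [← hp i, hij]
  exact hp' _ _ hne

lemma IsCompactObject.of_hasCoproducts [HasCoproducts.{t} C] {Z : C}
    (hZ : IsCompactObject.{v₁} Z) : IsCompactObject.{t} Z := by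
  intro J X c hc f
  by_cases hid : 𝟙 Z = 0
  · exact ⟨∅, fun _ ↦ 0, by rw [← id_comp f, hid, zero_comp, Finset.sum_empty]⟩
  · have : Small.{v₁} J := small_of_cofan_const hid (coproductIsCoproduct fun _ : J ↦ Z)
    exact hZ.exists_eq_sum_of_small hc f

lemma nonempty_isColimit_cofan_not_isZero {J : Type t} {X : J → C} {c : Cofan X}
    (hc : IsColimit c) :
    Nonempty (IsColimit (Cofan.mk c.pt fun j : {j // ¬IsZero (X j)} ↦ c.inj j)) := by
  classical
  rw [nonempty_isColimit_cofan_iff]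
  intro W f
  refine ⟨Cofan.IsColimit.desc hc fun j ↦ if hj : IsZero (X j) then 0 else f ⟨j, hj⟩,
    fun j ↦ ?_, fun u hu ↦ Cofan.IsColimit.hom_ext hc _ _ fun j ↦ ?_⟩
  · rw [cofan_mk_inj, Cofan.IsColimit.fac, dif_neg j.2]
  · by_cases hj : IsZero (X j)
    · exact hj.eq_of_src _ _
    · rw [Cofan.IsColimit.fac, dif_neg hj]
      exact hu ⟨j, hj⟩

variable [HasShift C ℤ]

lemma small_not_isZero_of_isTriangulatedGen {Z : C} (hZ : IsTriangulatedGen Z)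
    (hs : ∀ (X : C) (n : ℤ), Small.{t} (Z⟦n⟧ ⟶ X)) {J : Type t'} {X : J → C} {c : Cofan X}
    (hc : IsColimit c) : Small.{t} {j // ¬IsZero (X j)} := by
  choose p hp hp' using exists_proj_of_isColimit hc
  choose n g hg using fun j : {j // ¬IsZero (X j)} ↦ hZ (X j) j.2
  have sigma_comp_eq_zero {A B : C} (q : A ⟶ B) (x y : Σ n : ℤ, (Z⟦n⟧ ⟶ A)) (h : x = y)
      (hy : y.2 ≫ q = 0) : x.2 ≫ q = 0 := by
    subst h
    exact hy
  refine small_of_injective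
    (f := fun j ↦ (⟨n j, g j ≫ c.inj j⟩ : Σ n : ℤ, (Z⟦n⟧ ⟶ c.pt))) fun i j hij ↦ ?_
  by_contra hne
  refine hg i ?_
  have h := sigma_comp_eq_zero (p i) _ _ hij
    (by rw [assoc, hp' _ _ fun h ↦ hne (Subtype.ext h.symm), comp_zero])
  rwa [assoc, hp, comp_id] at h

lemma IsCompactObject.of_isTriangulatedGen {Z : C} (hc : IsCompactObject.{t} Z)
    (hZ : IsTriangulatedGen Z) (hs : ∀ (X : C) (n : ℤ), Small.{t} (Z⟦n⟧ ⟶ X)) :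
    IsCompactObject.{t'} Z := by
  intro J X c hX f
  have := small_not_isZero_of_isTriangulatedGen hZ hs hX
  obtain ⟨h⟩ := nonempty_isColimit_cofan_not_isZero hX
  obtain ⟨s, g, hf⟩ := hc.exists_eq_sum_of_small h f
  obtain ⟨s', g', h'⟩ :=
    exists_eq_sum_of_embedding hX (Function.Embedding.subtype fun j ↦ ¬IsZero (X j)) s g
  exact ⟨s', g', hf.trans h'⟩

end Universes

section EndomorphismRings

variable {C : Type u₁} [Category.{v₁} C] [Preadditive C] {D : Type u₂} [Category.{v₂} D]
  [Preadditive D]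

/-- The isomorphism of endomorphism rings induced by a fully faithful additive functor. -/
noncomputable def endRingEquivOfFullyFaithful (F : C ⥤ D) [F.Full] [F.Faithful] [F.Additive]
    (X : C) : End X ≃+* End (F.obj X) where
  toMulEquiv := (Functor.FullyFaithful.ofFullyFaithful F).mulEquivEnd X
  map_add' _ _ := F.map_add

/-- The isomorphism of endomorphism rings induced by an isomorphism of objects, by conjugation. -/
def endRingEquivOfIso {X Y : C} (e : X ≅ Y) : End X ≃+* End Y where
  toMulEquiv := e.conj
  map_add' f g := (congrArg (e.inv ≫ ·) (Preadditive.add_comp _ _ _ f g e.hom)).trans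
    (Preadditive.comp_add _ _ _ _ _ _)

end EndomorphismRings

section Transport

variable {C : Type u₁} [Category.{v₁} C] [Preadditive C] {D : Type u₂} [Category.{v₂} D]
  [Preadditive D] (F : C ⥤ D) {Z : C}

lemma isCompactObject_of_obj [F.IsEquivalence] [F.Additive]
    (hZ : IsCompactObject.{t} (F.obj Z)) : IsCompactObject.{t} Z :=
  have : F.asEquivalence.functor.Additive := ‹F.Additive›
  have : F.inv.Additive := F.asEquivalence.inverse_additive
  (hZ.map_equivalence F.inv).of_iso (F.asEquivalence.unitIso.app Z).symm

variable [HasShift C ℤ] [HasShift D ℤ] [F.CommShift ℤ]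

lemma isTriangulatedGen_of_obj [F.Full] [F.Faithful] [F.Additive]
    (hZ : IsTriangulatedGen (F.obj Z)) : IsTriangulatedGen Z := by
  intro X hX
  obtain ⟨n, f, hf⟩ := hZ (F.obj X) fun h ↦ hX (h.of_full_of_faithful_of_isZero F X)
  refine ⟨n, F.preimage ((F.commShiftIso n).hom.app Z ≫ f), fun h ↦ hf ?_⟩
  rw [← cancel_epi ((F.commShiftIso n).hom.app Z), comp_zero, ← F.map_preimage (_ ≫ f), h,
    F.map_zero]

/-- A fully faithful functor commuting with shifts identifies graded morphism groups. -/
noncomputable def homShiftEquivOfFullyFaithful [F.Full] [F.Faithful] (X Y : C) (n : ℤ) :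
    (X ⟶ Y⟦n⟧) ≃ (F.obj X ⟶ (F.obj Y)⟦n⟧) :=
  (Functor.FullyFaithful.ofFullyFaithful F).homEquiv.trans ((F.commShiftIso n).app Y).homToEquiv

end Transport

section TiltingObjects

variable {G : Type u} [Category.{v} G] [Abelian G] [HasDerivedCategory.{w} G]

lemma small_singleFunctor_hom_of_isCompactObject [IsGrothendieckAbelian.{v} G] {T : G}
    (hT : IsCompactObject.{v} ((singleFunctor G 0).obj T)) (X : DerivedCategory G) (n : ℤ) :
    Small.{v} (((singleFunctor G 0).obj T)⟦n⟧ ⟶ X) := by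
  have : HasFiniteBiproducts G := Abelian.hasFiniteBiproducts
  have : AB4OfSize.{v} G := AB4.of_AB5 G
  refine small_hom_of_isCompactObject (hT.shift n) (fun M m ↦ ?_) X
  exact small_map ((shiftSingleFunctorIso T n).homCongr (.refl ((singleFunctor G m).obj M)))

theorem exists_triangleEquivalenceData_of_compact_rigid_generator [IsGrothendieckAbelian.{v} G]
    {T : G} [HasExt.{t} G] [HasDerivedCategory.{w'} (ModuleCat.{v} (End T)ᵐᵒᵖ)]
    (hc : IsCompactObj ((singleFunctor G 0).obj T))
    (hT : ∀ i : ℕ, 0 < i → Subsingleton (Abelian.Ext.{t} T T i))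
    (hgen : IsTriangulatedGen ((singleFunctor G 0).obj T)) :
    ∃ E : TriangleEquivalenceData (DerivedCategory G)
        (DerivedCategory (ModuleCat.{v} (End T)ᵐᵒᵖ)),
      Nonempty (E.functor.obj ((singleFunctor G 0).obj T) ≅
        (singleFunctor (ModuleCat.{v} (End T)ᵐᵒᵖ) 0).obj
          (ModuleCat.of (End T)ᵐᵒᵖ (End T)ᵐᵒᵖ)) := by
  have : HasFiniteBiproducts G := Abelian.hasFiniteBiproducts
  have : AB4OfSize.{v} G := AB4.of_AB5 G
  have : HasCoproducts.{v} (DerivedCategory G) := hasCoproducts_derivedCategory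
  have hc' : IsCompactObject.{v} ((singleFunctor G 0).obj T) :=
    (isCompactObj_iff.1 hc).of_hasCoproducts
  exact exists_triangleEquivalenceData_moduleCat
    (fun i hi ↦ Abelian.Ext.homEquiv.subsingleton_congr.1 (hT i hi)) hc' hgen
    (small_singleFunctor_hom_of_isCompactObject hc')

section Regular

variable (R : Type v) [Ring R] [HasDerivedCategory.{w'} (ModuleCat.{v} R)]

lemma isCompactObject_singleFunctor_self :
    IsCompactObject.{t} ((singleFunctor (ModuleCat.{v} R) 0).obj (ModuleCat.of R R)) := by
  have hc := isCompactObject_singleFunctor (ModuleCat.of R R) (isCompactObject_self.{v} R) 0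
  refine hc.of_isTriangulatedGen (isTriangulatedGen_singleFunctor (isSeparator_self R))
    fun X n ↦ ?_
  have := small_singleFunctor_hom (ModuleCat.of R R) (-n) X
  exact small_map ((shiftSingleFunctorIso (ModuleCat.of R R) n).homCongr (.refl X))

lemma subsingleton_singleFunctor_self_hom_shift {i : ℕ} (hi : 0 < i) : Subsingleton
    ((singleFunctor (ModuleCat.{v} R) 0).obj (ModuleCat.of R R) ⟶
      ((singleFunctor (ModuleCat.{v} R) 0).obj (ModuleCat.of R R))⟦(i : ℤ)⟧) := by
  have := HasExt.standard (ModuleCat.{v} R)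
  obtain ⟨i, rfl⟩ := Nat.exists_eq_add_one.2 hi
  exact Abelian.Ext.homEquiv.subsingleton_congr.1 (Abelian.Ext.subsingleton_of_projective _ _ i)

end Regular

variable {R : Type v} [Ring R] [HasDerivedCategory.{w'} (ModuleCat.{v} R)] {T : G}
  (E : TriangleEquivalenceData (DerivedCategory G) (DerivedCategory (ModuleCat.{v} R)))
  (e : E.functor.obj ((singleFunctor G 0).obj T) ≅
    (singleFunctor (ModuleCat.{v} R) 0).obj (ModuleCat.of R R))

include e

theorem compact_rigid_generator_of_triangleEquivalenceData [HasExt.{t} G] :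
    IsCompactObj ((singleFunctor G 0).obj T) ∧
      (∀ i : ℕ, 0 < i → Subsingleton (Abelian.Ext.{t} T T i)) ∧
        IsTriangulatedGen ((singleFunctor G 0).obj T) := by
  obtain ⟨F, _, _, _⟩ := E
  refine ⟨isCompactObj_iff.2 ?_, fun i hi ↦ ?_, ?_⟩
  · exact isCompactObject_of_obj F ((isCompactObject_singleFunctor_self R).of_iso e.symm)
  · have := subsingleton_singleFunctor_self_hom_shift R hi
    exact (Abelian.Ext.homEquiv.trans ((homShiftEquivOfFullyFaithful F _ _ i).trans
      (e.homCongr ((shiftFunctor _ (i : ℤ)).mapIso e)))).subsingleton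
  · exact isTriangulatedGen_of_obj F (isTriangulatedGen_of_iso e.symm
      (isTriangulatedGen_singleFunctor (isSeparator_self R)))

theorem nonempty_ringEquiv_end_of_triangleEquivalenceData : Nonempty (R ≃+* (End T)ᵐᵒᵖ) := by
  obtain ⟨F, _, _, _⟩ := E
  have endT : End T ≃+* End (F.obj ((singleFunctor G 0).obj T)) :=
    (endRingEquivOfFullyFaithful (singleFunctor G 0) T).trans (endRingEquivOfFullyFaithful F _)
  have endR : Rᵐᵒᵖ ≃+* End ((singleFunctor (ModuleCat.{v} R) 0).obj (ModuleCat.of R R)) :=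
    ((RingEquiv.moduleEndSelf R).trans (ModuleCat.of R R).endRingEquiv.symm).trans
      (endRingEquivOfFullyFaithful (singleFunctor _ 0) _)
  exact ⟨(RingEquiv.opOp R).trans
    ((endR.trans (endRingEquivOfIso e.symm)).trans endT.symm).op⟩

end TiltingObjects

end Tilting

theorem statement0 (G : Type u) [Category.{v} G] [Abelian G]
    [HasFilteredColimits G] [AB5 G] [HasSeparator G]
    [HasDerivedCategory.{w} G] [HasExt.{w} G] (T : G) :
    (IsTiltingObject G T ↔
      (IsCompactObj ((singleFunctor G 0).obj T) ∧
        (∀ i : ℕ, 0 < i → Subsingleton (Abelian.Ext T T i)) ∧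
        IsTriangulatedGen ((singleFunctor G 0).obj T))) ∧
    (IsTiltingObject G T →
      (∀ (R : Type v) (_ : Ring R),
        letI : HasDerivedCategory (ModuleCat.{v} R) := HasDerivedCategory.standard _
        ∀ E : TriangleEquivalenceData (DerivedCategory G) (DerivedCategory (ModuleCat.{v} R)),
          Nonempty (E.functor.obj ((singleFunctor G 0).obj T)
              ≅ (singleFunctor (ModuleCat.{v} R) 0).obj (ModuleCat.of R R)) →
            Nonempty (R ≃+* (End T)ᵐᵒᵖ)) ∧
      (letI : HasDerivedCategory (ModuleCat.{v} (End T)ᵐᵒᵖ) := HasDerivedCategory.standard _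
       ∃ E : TriangleEquivalenceData (DerivedCategory G)
          (DerivedCategory (ModuleCat.{v} (End T)ᵐᵒᵖ)),
        Nonempty (E.functor.obj ((singleFunctor G 0).obj T)
          ≅ (singleFunctor (ModuleCat.{v} (End T)ᵐᵒᵖ) 0).obj
              (ModuleCat.of (End T)ᵐᵒᵖ (End T)ᵐᵒᵖ)))) := by
  have : IsGrothendieckAbelian.{v} G := {}
  have conditions (h : IsTiltingObject G T) : IsCompactObj ((singleFunctor G 0).obj T) ∧
      (∀ i : ℕ, 0 < i → Subsingleton (Abelian.Ext T T i)) ∧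
        IsTriangulatedGen ((singleFunctor G 0).obj T) := by
    obtain ⟨R, _, E, ⟨e⟩⟩ := h
    let := HasDerivedCategory.standard (ModuleCat.{v} R)
    exact Tilting.compact_rigid_generator_of_triangleEquivalenceData E e
  let := HasDerivedCategory.standard (ModuleCat.{v} (End T)ᵐᵒᵖ)
  have equivalence (h : IsCompactObj ((singleFunctor G 0).obj T) ∧
      (∀ i : ℕ, 0 < i → Subsingleton (Abelian.Ext T T i)) ∧
        IsTriangulatedGen ((singleFunctor G 0).obj T)) :=
    Tilting.exists_triangleEquivalenceData_of_compact_rigid_generator h.1 h.2.1 h.2.2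
  refine ⟨⟨conditions, fun h ↦ ⟨_, _, equivalence h⟩⟩, fun h ↦
    ⟨fun R _ E ⟨e⟩ ↦ ?_, equivalence (conditions h)⟩⟩
  let := HasDerivedCategory.standard (ModuleCat.{v} R)
  exact Tilting.nonempty_ringEquiv_end_of_triangleEquivalenceData E e
end

section
/- Let R be a ring, C a big cotilting right R-module with cotilting class X_C, and X ∈ D(R). Then the following are equivalent: (1) Hom_{D(R)}(X, Σ^i C) = 0 for all i > 0; (2) X is isomorphic in D(R) to a complex ⋯ → 0 → X^0 → X^1 → X^2 → ⋯ concentrated in nonnegative degrees with all X^i ∈ X_C; (3) X is isomorphic in D(R) to such a complex with all X^i direct summands of products of copies of C. -/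
/-!
Statement 12: Let `R` be a ring, `C` a big cotilting module with cotilting class `X_C` and
`X ∈ D(R)`.  TFAE: (1) `Hom(X, Σ^i C) = 0` for all `i > 0`; (2) `X` is isomorphic to a complex
concentrated in nonnegative degrees with components in `X_C`; (3) likewise with components
in `Prod C`.
-/

universe e w v u

open CategoryTheory Category Limits

namespace PaperStmt

variable {R : Type v} [Ring R]

/-- `M` belongs to `Prod C`: it is a direct summand of a product of copies of `C`. -/
def InProdOf (C M : ModuleCat.{v} R) : Prop :=
  ∃ (ι : Type v) (s : M ⟶ ∏ᶜ (fun _ : ι => C)) (r : (∏ᶜ (fun _ : ι => C)) ⟶ M),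
    s ≫ r = 𝟙 M

/-- `C` has injective dimension at most `n`. -/
def InjDimLE (C : ModuleCat.{v} R) (n : ℕ) : Prop :=
  ∃ S : ComposableArrows (ModuleCat.{v} R) (n + 3),
    S.Exact ∧ IsZero (S.obj 0) ∧ IsZero (S.obj (Fin.last (n + 3))) ∧
    Nonempty (S.obj ⟨1, by omega⟩ ≅ C) ∧
    ∀ (i : ℕ) (_ : 2 ≤ i) (_ : i ≤ n + 2), Injective (S.obj ⟨i, by omega⟩)

/-- `C` is a big `n`-cotilting module. -/
def IsBigNCotilting [HasExt.{e} (ModuleCat.{v} R)] (n : ℕ) (C : ModuleCat.{v} R) : Prop :=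
  InjDimLE C n ∧
  (∀ (ι : Type v) (j : ℕ), 0 < j →
      Subsingleton (Abelian.Ext (∏ᶜ (fun _ : ι => C)) C j)) ∧
  (∃ (r : ℕ) (S : ComposableArrows (ModuleCat.{v} R) (r + 3)),
    S.Exact ∧ IsZero (S.obj 0) ∧ IsZero (S.obj (Fin.last (r + 3))) ∧
    (∀ (i : ℕ) (_ : 1 ≤ i) (_ : i ≤ r + 1), InProdOf C (S.obj ⟨i, by omega⟩)) ∧
    Injective (S.obj ⟨r + 2, by omega⟩) ∧ IsCoseparator (S.obj ⟨r + 2, by omega⟩))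

/-- `C` is a big cotilting module. -/
def IsBigCotilting [HasExt.{e} (ModuleCat.{v} R)] (C : ModuleCat.{v} R) : Prop :=
  ∃ n : ℕ, IsBigNCotilting n C

/-- Membership in the cotilting class `X_C = {M : Ext^i(M, C) = 0 for all i > 0}`. -/
def InCotiltingClass [HasExt.{e} (ModuleCat.{v} R)] (C M : ModuleCat.{v} R) : Prop :=
  ∀ i : ℕ, 0 < i → Subsingleton (Abelian.Ext M C i)

end PaperStmt

open PaperStmt DerivedCategory

/-!
Replace `X` by a complex `F` with components in `X_C`; this is possible because `C` has finite
injective dimension, so that high syzygies lie in `X_C`. The cone of a quasi-isomorphism between two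
such complexes stays exact under `Hom(-, C)`, hence `Hom(X, Σ^i C) = 0` if and only if `Hom(F, C)`
is exact at `F^{-i}`. If this holds for all `i > 0`, then induction along the finite resolution of
the cogenerator `Q` by objects of `Prod C` shows that `Hom(F, Q)` is exact at `F^j` for all `j < 0`.
So `F` itself is exact in negative degrees, and its truncation in degrees `≥ 0` has components in
`X_C`. Finally, every object of `X_C` embeds into an object of `Prod C` with cokernel in `X_C`, and
iterated pushouts along such embeddings turn the truncation into a complex over `Prod C`.
-/

namespace Cotilting

open Abelian

variable {A : Type u} [Category.{v} A] [Abelian A]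

section Ext

variable [HasExt.{e} A]

lemma subsingleton_ext_of_isZero {M : A} (hM : IsZero M) (N : A) (i : ℕ) :
    Subsingleton (Ext M N i) := by
  refine subsingleton_of_forall_eq 0 fun x => ?_
  rw [← Ext.mk₀_id_comp x, hM.eq_of_src (𝟙 M) 0, Ext.mk₀_zero, Ext.zero_comp]

lemma subsingleton_ext_of_retract {M M' : A} (r : Retract M M') (N : A) (i : ℕ)
    (h : Subsingleton (Ext M' N i)) : Subsingleton (Ext M N i) := by
  refine subsingleton_of_forall_eq 0 fun x => ?_
  rw [← Ext.mk₀_id_comp x, ← r.retract, ← Ext.mk₀_comp_mk₀, Ext.comp_assoc_of_second_deg_zero,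
    Subsingleton.elim ((Ext.mk₀ r.r).comp x (zero_add i)) 0, Ext.comp_zero]

lemma subsingleton_ext_X₁ {S : ShortComplex A} (hS : S.ShortExact) (N : A) (i : ℕ)
    (h₂ : Subsingleton (Ext S.X₂ N i)) (h₃ : Subsingleton (Ext S.X₃ N (i + 1))) :
    Subsingleton (Ext S.X₁ N i) := by
  refine subsingleton_of_forall_eq 0 fun x => ?_
  obtain ⟨y, rfl⟩ := Ext.contravariant_sequence_exact₁ hS N x (add_comm 1 i)
    (Subsingleton.elim _ _)
  rw [Subsingleton.elim y 0, Ext.comp_zero]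

lemma subsingleton_ext_X₂ {S : ShortComplex A} (hS : S.ShortExact) (N : A) (i : ℕ)
    (h₁ : Subsingleton (Ext S.X₁ N i)) (h₃ : Subsingleton (Ext S.X₃ N i)) :
    Subsingleton (Ext S.X₂ N i) := by
  refine subsingleton_of_forall_eq 0 fun x => ?_
  obtain ⟨y, rfl⟩ := Ext.contravariant_sequence_exact₂ hS N x (Subsingleton.elim _ _)
  rw [Subsingleton.elim y 0, Ext.comp_zero]

lemma subsingleton_ext_X₃ {S : ShortComplex A} (hS : S.ShortExact) (N : A) (i : ℕ)
    (h₁ : Subsingleton (Ext S.X₁ N i)) (h₂ : Subsingleton (Ext S.X₂ N (i + 1))) :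
    Subsingleton (Ext S.X₃ N (i + 1)) := by
  refine subsingleton_of_forall_eq 0 fun x => ?_
  obtain ⟨y, rfl⟩ := Ext.contravariant_sequence_exact₃ hS N x (Subsingleton.elim _ _)
    (add_comm 1 i)
  rw [Subsingleton.elim y 0, Ext.comp_zero]

lemma subsingleton_ext_to_X₃ {S : ShortComplex A} (hS : S.ShortExact) (M : A) (i : ℕ)
    (h₁ : Subsingleton (Ext M S.X₁ (i + 1))) (h₂ : Subsingleton (Ext M S.X₂ i)) :
    Subsingleton (Ext M S.X₃ i) := by
  refine subsingleton_of_forall_eq 0 fun x => ?_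
  obtain ⟨y, rfl⟩ := Ext.covariant_sequence_exact₃ M hS x rfl (Subsingleton.elim _ _)
  rw [Subsingleton.elim y 0, Ext.zero_comp]

lemma subsingleton_ext_one_X₃ {S : ShortComplex A} (hS : S.ShortExact) (N : A)
    (h : ∀ f : S.X₁ ⟶ N, ∃ g : S.X₂ ⟶ N, S.f ≫ g = f) (h₂ : Subsingleton (Ext S.X₂ N 1)) :
    Subsingleton (Ext S.X₃ N 1) := by
  refine subsingleton_of_forall_eq 0 fun x => ?_
  obtain ⟨y, rfl⟩ := Ext.contravariant_sequence_exact₃ hS N x (Subsingleton.elim _ _)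
    (add_zero 1)
  obtain ⟨f, rfl⟩ := Ext.homEquiv₀.symm.surjective y
  obtain ⟨g, rfl⟩ := h f
  rw [Ext.homEquiv₀_symm_apply, ← Ext.mk₀_comp_mk₀, hS.extClass_comp_assoc]

lemma exists_f_comp_eq {S : ShortComplex A} (hS : S.ShortExact) {N : A}
    (h₃ : Subsingleton (Ext S.X₃ N 1)) (f : S.X₁ ⟶ N) : ∃ g : S.X₂ ⟶ N, S.f ≫ g = f := by
  obtain ⟨y, hy⟩ := Ext.contravariant_sequence_exact₁ hS N (Ext.mk₀ f) (add_zero 1)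
    (Subsingleton.elim _ _)
  obtain ⟨g, rfl⟩ := Ext.homEquiv₀.symm.surjective y
  exact ⟨g, Ext.homEquiv₀.symm.injective (by simpa using hy)⟩

lemma exists_comp_g_eq {S : ShortComplex A} (hS : S.ShortExact) {M : A}
    (h₁ : Subsingleton (Ext M S.X₁ 1)) (f : M ⟶ S.X₃) : ∃ g : M ⟶ S.X₂, g ≫ S.g = f := by
  obtain ⟨y, hy⟩ := Ext.covariant_sequence_exact₃ M hS (Ext.mk₀ f) (zero_add 1)
    (Subsingleton.elim _ _)
  obtain ⟨g, rfl⟩ := Ext.homEquiv₀.symm.surjective y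
  exact ⟨g, Ext.homEquiv₀.symm.injective (by simpa using hy)⟩

end Ext

section Classes

variable [HasExt.{e} A]

/-- The left `Ext`-orthogonal of `C` in positive degrees. For a cotilting object this is its
cotilting class `X_C`. -/
def cotiltingClass (C : A) : ObjectProperty A :=
  fun M => ∀ i : ℕ, 0 < i → Subsingleton (Ext M C i)

/-- `Prod C`: the retracts of products of copies of `C`, indexed by types in the universe of
the morphisms of `A`. -/
def prodClass [HasProducts.{v} A] (C : A) : ObjectProperty A :=
  fun M => ∃ (ι : Type v) (s : M ⟶ ∏ᶜ fun _ : ι => C) (r : (∏ᶜ fun _ : ι => C) ⟶ M), s ≫ r = 𝟙 M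

/-- `HasFiniteResolution P N` means that there is an exact sequence
`0 ⟶ P_r ⟶ ⋯ ⟶ P_0 ⟶ N ⟶ 0` with all `P_i` in `P`. It is encoded through the syzygies, so that
its recursor is induction on the length of the resolution. -/
inductive HasFiniteResolution (P : ObjectProperty A) : A → Prop
  | of_isZero {N : A} (hN : IsZero N) : HasFiniteResolution P N
  | of_shortExact {S : ShortComplex A} (hS : S.ShortExact) (h₁ : HasFiniteResolution P S.X₁)
      (h₂ : P S.X₂) : HasFiniteResolution P S.X₃

/-- A big cotilting object of an abelian category. The coseparator `Q` of the last condition is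
not required to be injective. -/
structure IsBigCotiltingObject [HasProducts.{v} A] (C : A) : Prop where
  exists_injectiveDimensionLT : ∃ n : ℕ, HasInjectiveDimensionLT C n
  subsingleton_ext_pi (ι : Type v) (i : ℕ) (hi : 0 < i) :
    Subsingleton (Ext (∏ᶜ fun _ : ι => C) C i)
  exists_isCoseparator : ∃ Q : A, IsCoseparator Q ∧ HasFiniteResolution (prodClass C) Q

instance (C : A) : (cotiltingClass C).IsClosedUnderExtensions where
  prop_X₂_of_shortExact hS h₁ h₃ i hi := subsingleton_ext_X₂ hS C i (h₁ i hi) (h₃ i hi)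

instance (C : A) : (cotiltingClass C).IsStableUnderRetracts where
  of_retract r h i hi := subsingleton_ext_of_retract r C i (h i hi)

instance [HasProducts.{v} A] (C : A) : (prodClass C).IsStableUnderRetracts where
  of_retract r := fun ⟨ι, s, t, hst⟩ => ⟨ι, r.i ≫ s, t ≫ r.r, by simp [reassoc_of% hst]⟩

lemma cotiltingClass_of_isZero (C : A) {M : A} (hM : IsZero M) : cotiltingClass C M :=
  fun i _ => subsingleton_ext_of_isZero hM C i

lemma cotiltingClass_of_projective (C M : A) [Projective M] : cotiltingClass C M := by
  rintro (_ | i) hi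
  · exact absurd hi (lt_irrefl 0)
  · exact Ext.subsingleton_of_projective M C i

lemma cotiltingClass_X₁ {C : A} {S : ShortComplex A} (hS : S.ShortExact)
    (h₂ : cotiltingClass C S.X₂) (h₃ : cotiltingClass C S.X₃) : cotiltingClass C S.X₁ :=
  fun i hi => subsingleton_ext_X₁ hS C i (h₂ i hi) (h₃ (i + 1) i.succ_pos)

lemma cotiltingClass_X₃ {C : A} {S : ShortComplex A} (hS : S.ShortExact)
    (h₁ : cotiltingClass C S.X₁) (h₂ : cotiltingClass C S.X₂)
    (h : ∀ f : S.X₁ ⟶ C, ∃ g : S.X₂ ⟶ C, S.f ≫ g = f) : cotiltingClass C S.X₃ := by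
  rintro (_ | _ | i) hi
  · exact absurd hi (lt_irrefl 0)
  · exact subsingleton_ext_one_X₃ hS C h (h₂ 1 one_pos)
  · exact subsingleton_ext_X₃ hS C (i + 1) (h₁ _ i.succ_pos) (h₂ _ (i + 1).succ_pos)

lemma IsBigCotiltingObject.prodClass_le [HasProducts.{v} A] {C : A}
    (hC : IsBigCotiltingObject.{e} C) : prodClass C ≤ cotiltingClass.{e} C :=
  fun _ ⟨ι, s, r, hsr⟩ => (cotiltingClass C).prop_of_retract ⟨s, r, hsr⟩
    fun i hi => hC.subsingleton_ext_pi ι i hi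

end Classes

section RightOrthogonal

variable [HasExt.{e} A] [EnoughProjectives A] {C N : A}

/-- It is enough to extend along the first syzygies, since these stay in the cotilting class. -/
lemma subsingleton_ext_of_forall_exists_f_comp_eq
    (h : ∀ S : ShortComplex A, S.ShortExact → cotiltingClass C S.X₃ →
      ∀ f : S.X₁ ⟶ N, ∃ g : S.X₂ ⟶ N, S.f ≫ g = f) {M : A} (hM : cotiltingClass C M) (i : ℕ) :
    Subsingleton (Ext M N (i + 1)) := by
  induction i generalizing M with
  | zero =>
    let S := ShortComplex.mk (kernel.ι (Projective.π M)) (Projective.π M) (kernel.condition _)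
    have hS : S.ShortExact := { exact := ShortComplex.exact_kernel _ }
    exact subsingleton_ext_one_X₃ hS N (h S hS hM) (Ext.subsingleton_of_projective _ _ 0)
  | succ i ih =>
    let S := ShortComplex.mk (kernel.ι (Projective.π M)) (Projective.π M) (kernel.condition _)
    have hS : S.ShortExact := { exact := ShortComplex.exact_kernel _ }
    have hS₁ : cotiltingClass C S.X₁ :=
      cotiltingClass_X₁ hS (cotiltingClass_of_projective C (Projective.over M)) hM
    exact subsingleton_ext_X₃ hS N (i + 1) (ih hS₁) (Ext.subsingleton_of_projective _ _ (i + 1))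

variable [HasProducts.{v} A]

lemma subsingleton_ext_of_prodClass (hN : prodClass C N) {M : A} (hM : cotiltingClass C M)
    (i : ℕ) : Subsingleton (Ext M N (i + 1)) := by
  obtain ⟨ι, s, r, hsr⟩ := hN
  refine subsingleton_ext_of_forall_exists_f_comp_eq (fun S hS h₃ f => ?_) hM i
  choose g hg using fun k : ι => exists_f_comp_eq hS (h₃ 1 one_pos) (f ≫ s ≫ Pi.π _ k)
  have hfs : S.f ≫ Pi.lift g = f ≫ s := by
    refine Pi.hom_ext _ _ fun k => ?_
    simp [hg]
  exact ⟨Pi.lift g ≫ r, by rw [reassoc_of% hfs, hsr, comp_id]⟩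

lemma HasFiniteResolution.subsingleton_ext (hN : HasFiniteResolution (prodClass C) N) {M : A}
    (hM : cotiltingClass C M) (i : ℕ) : Subsingleton (Ext M N (i + 1)) := by
  induction hN generalizing i with
  | of_isZero hN =>
    exact subsingleton_ext_of_forall_exists_f_comp_eq
      (fun _ _ _ _ => ⟨0, hN.eq_of_tgt _ _⟩) hM i
  | of_shortExact hS _ h₂ ih =>
    exact subsingleton_ext_to_X₃ hS M _ (ih (i + 1)) (subsingleton_ext_of_prodClass h₂ hM i)

/-- Maps into the middle term of a resolution step lift along the epimorphism, so vanishing is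
tested on `C`. -/
lemma HasFiniteResolution.comp_eq_zero (hN : HasFiniteResolution (prodClass C) N) {M Z : A}
    (hM : cotiltingClass C M) (a : Z ⟶ M) (ha : ∀ f : M ⟶ C, a ≫ f = 0) (q : M ⟶ N) :
    a ≫ q = 0 := by
  cases hN with
  | of_isZero hN => exact hN.eq_of_tgt _ _
  | @of_shortExact S hS h₁ h₂ =>
    obtain ⟨q, rfl⟩ := exists_comp_g_eq hS (h₁.subsingleton_ext hM 0) q
    obtain ⟨ι, s, r, hsr⟩ := h₂
    have has : a ≫ q ≫ s = 0 := by
      refine Pi.hom_ext _ _ fun k => ?_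
      simpa using ha (q ≫ s ≫ Pi.π _ k)
    have haq : a ≫ q = 0 := by simpa [hsr] using has =≫ r
    rw [reassoc_of% haq, zero_comp]

lemma IsBigCotiltingObject.exists_embedding (hC : IsBigCotiltingObject.{e} C) {M : A}
    (hM : cotiltingClass.{e} C M) :
    ∃ (P : A) (j : M ⟶ P), Mono j ∧ prodClass C P ∧ cotiltingClass.{e} C (cokernel j) := by
  let j : M ⟶ ∏ᶜ fun _ : M ⟶ C => C := Pi.lift id
  have hj (f : M ⟶ C) : j ≫ Pi.π _ f = f := Pi.lift_π _ _
  have hP : prodClass C (∏ᶜ fun _ : M ⟶ C => C) := ⟨_, 𝟙 _, 𝟙 _, comp_id _⟩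
  have hj_mono : Mono j := by
    obtain ⟨Q, hQ, hQ_res⟩ := hC.exists_isCoseparator
    refine Preadditive.mono_of_cancel_zero _ fun a ha => (isCoseparator_def _).1 hQ _ _ fun q => ?_
    rw [zero_comp]
    exact hQ_res.comp_eq_zero hM a (fun f => by rw [← hj f, reassoc_of% ha, zero_comp]) q
  have hS : (ShortComplex.mk j (cokernel.π j) (cokernel.condition j)).ShortExact :=
    { exact := ShortComplex.exact_cokernel j }
  exact ⟨_, j, hj_mono, hP, cotiltingClass_X₃ hS hM (hC.prodClass_le _ hP) fun f => ⟨_, hj f⟩⟩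

end RightOrthogonal

section HomExactAt

/-- Exactness in degree `j` of the complex `Hom(F, N)`: every map `F.X j ⟶ N` killed by the
incoming differential factors through the outgoing one. -/
def HomExactAt (F : CochainComplex A ℤ) (N : A) (j : ℤ) : Prop :=
  ∀ ⦃i k : ℤ⦄, i + 1 = j → j + 1 = k → ∀ g : F.X j ⟶ N, F.d i j ≫ g = 0 →
    ∃ h : F.X k ⟶ N, F.d j k ≫ h = g

variable {F : CochainComplex A ℤ}

lemma homExactAt_iff_fromOpcycles {N : A} {j k : ℤ} (hjk : j + 1 = k) :
    HomExactAt F N j ↔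
      ∀ g : F.opcycles j ⟶ N, ∃ h : F.X k ⟶ N, F.fromOpcycles j k ≫ h = g := by
  constructor
  · intro hF g
    obtain ⟨h, hh⟩ := hF (sub_add_cancel j 1) hjk (F.pOpcycles j ≫ g) (by simp)
    exact ⟨h, by rw [← cancel_epi (F.pOpcycles j), F.p_fromOpcycles_assoc, hh]⟩
  · rintro hF i _ hij rfl g hg
    obtain rfl : _ = k := hjk
    obtain ⟨h, hh⟩ := hF (F.descOpcycles g i (by simp [← hij]) hg)
    exact ⟨h, by rw [← F.p_fromOpcycles_assoc, hh, F.p_descOpcycles]⟩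

lemma homExactAt_of_isZero {j : ℤ} (hF : IsZero (F.X j)) (N : A) : HomExactAt F N j :=
  fun _ _ _ _ _ _ => ⟨0, hF.eq_of_src _ _⟩

lemma shortExact_opcycles {i j : ℤ} (hij : i + 1 = j) (hF : F.ExactAt i) :
    (ShortComplex.mk (F.fromOpcycles i j) (F.pOpcycles j)
      (by simp [← cancel_epi (F.pOpcycles i)])).ShortExact where
  exact := by
    let φ : ShortComplex.mk (F.d i j) (F.pOpcycles j) (by simp) ⟶
        ShortComplex.mk (F.fromOpcycles i j) (F.pOpcycles j)
          (by simp [← cancel_epi (F.pOpcycles i)]) :=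
      { τ₁ := F.pOpcycles i, τ₂ := 𝟙 _, τ₃ := 𝟙 _ }
    have : Epi φ.τ₁ := inferInstanceAs (Epi (F.pOpcycles i))
    exact (ShortComplex.exact_iff_of_epi_of_isIso_of_mono φ).1
      (ShortComplex.exact_of_g_is_cokernel _ (F.opcyclesIsCokernel i j (by simp [← hij])))
  mono_f := Preadditive.mono_of_isZero_kernel' _ (F.homologyIsKernel i j (by simp [← hij]))
    ((F.exactAt_iff_isZero_homology i).1 hF)
  epi_g := inferInstanceAs (Epi (F.pOpcycles j))

lemma exactAt_of_homExactAt {Q : A} (hQ : IsCoseparator Q) {j : ℤ} (hF : HomExactAt F Q j) :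
    F.ExactAt j := by
  have : Mono (F.fromOpcycles j (j + 1)) :=
    Preadditive.mono_of_cancel_zero _ fun a ha => (isCoseparator_def _).1 hQ _ _ fun q => by
      obtain ⟨h, rfl⟩ := (homExactAt_iff_fromOpcycles rfl).1 hF q
      rw [reassoc_of% ha, zero_comp, zero_comp]
  have hι : F.homologyι j = 0 := by
    rw [← cancel_mono (F.fromOpcycles j (j + 1)), F.homologyι_comp_fromOpcycles, zero_comp]
  exact (F.exactAt_iff_isZero_homology j).2 (IsZero.of_mono_eq_zero _ hι)

section Ext

variable [HasExt.{e} A] {C : A}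

/-- Dimension shifting along the opcycles, up to the injective dimension of `C`. -/
lemma subsingleton_ext_opcycles_of_acyclic {n : ℕ} [HasInjectiveDimensionLT C n]
    (hF : F.Acyclic) (hFC : ∀ j, cotiltingClass C (F.X j)) (m i : ℕ) (h : n ≤ i + 1 + m) (j : ℤ) :
    Subsingleton (Ext (F.opcycles j) C (i + 1)) := by
  induction m generalizing i j with
  | zero => exact HasInjectiveDimensionLT.subsingleton C n (i + 1) h _
  | succ m ih =>
    exact subsingleton_ext_X₁ (shortExact_opcycles rfl (hF j)) C (i + 1)
      (hFC _ _ i.succ_pos) (ih (i + 1) (by lia) (j + 1))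

lemma homExactAt_of_acyclic {n : ℕ} [HasInjectiveDimensionLT C n] (hF : F.Acyclic)
    (hFC : ∀ j, cotiltingClass C (F.X j)) (j : ℤ) : HomExactAt F C j :=
  (homExactAt_iff_fromOpcycles rfl).2 <| exists_f_comp_eq (shortExact_opcycles rfl (hF j))
    (subsingleton_ext_opcycles_of_acyclic (n := n) hF hFC n 0 (by lia) (j + 1))

end Ext

end HomExactAt

section Resolution

open CochainComplex CochainComplex.HomComplex

lemma mappingCone_X {K L : CochainComplex A ℤ} (φ : K ⟶ L) (P : ObjectProperty A)
    [P.IsClosedUnderExtensions] [P.IsClosedUnderIsomorphisms] {j : ℤ}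
    (hK : P (K.X (j + 1))) (hL : P (L.X j)) : P ((mappingCone φ).X j) :=
  P.prop_of_iso (HomologicalComplex.homotopyCofiber.XIsoBiprod φ j (j + 1) rfl).symm
    (P.prop_biprod hK hL)

lemma acyclic_mappingCone_iff {K L : CochainComplex A ℤ} (φ : K ⟶ L) :
    (mappingCone φ).Acyclic ↔ QuasiIso φ := by
  rw [← HomotopyCategory.quotient_obj_mem_subcategoryAcyclic_iff_acyclic,
    ← HomologicalComplex.mem_quasiIso_iff, ← HomotopyCategory.quotient_map_mem_quasiIso_iff,
    HomotopyCategory.quasiIso_eq_trW_subcategoryAcyclic]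
  exact ((HomotopyCategory.subcategoryAcyclic A).trW_iff_of_distinguished _
    (HomotopyCategory.mappingCone_triangleh_distinguished φ)).symm

lemma quasiIso_mappingCone_map {K₁ L₁ K₂ L₂ : CochainComplex A ℤ} (φ₁ : K₁ ⟶ L₁) (φ₂ : K₂ ⟶ L₂)
    (a : K₁ ⟶ K₂) (b : L₁ ⟶ L₂) (comm : φ₁ ≫ b = a ≫ φ₂) [QuasiIso a] [QuasiIso b] :
    QuasiIso (mappingCone.map φ₁ φ₂ a b comm) := by
  let := HasDerivedCategory.standard A
  rw [← isIso_Q_map_iff_quasiIso]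
  exact Pretriangulated.isIso₃_of_isIso₁₂
    (Q.mapTriangle.map (mappingCone.triangleMap φ₁ φ₂ a b comm))
    (mappingCone_triangle_distinguished φ₁) (mappingCone_triangle_distinguished φ₂)
    (inferInstanceAs (IsIso (Q.map a))) (inferInstanceAs (IsIso (Q.map b)))

lemma exists_epi_of_projective_X [EnoughProjectives A] (Y : CochainComplex A ℤ) :
    ∃ (P : CochainComplex A ℤ) (p : P ⟶ Y), Epi p ∧ ∀ j, Projective (P.X j) := by
  let K : CochainComplex A ℤ := { X := fun j => Projective.over (Y.X (j - 1)), d := 0 }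
  let α : Cochain K Y (-1) := Cochain.mk fun i j hij =>
    Projective.π (Y.X (i - 1)) ≫ (Y.XIsoOfEq hij).hom
  let p : mappingCone (𝟙 K) ⟶ Y := mappingCone.desc (𝟙 K) α
    (Cocycle.homOf (Cocycle.mk (δ (-1) 0 α) 1 (zero_add 1) (δ_δ _ _ _ _))) (by simp)
  have hp (j : ℤ) : (mappingCone.inl (𝟙 K)).v (j + 1) j (by lia) ≫ p.f j =
      Projective.π (Y.X (j + 1 - 1)) ≫ (Y.XIsoOfEq (by lia)).hom := by simp [p, α]
  have hp_epi (j : ℤ) : Epi (p.f j) :=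
    have : Epi ((mappingCone.inl (𝟙 K)).v (j + 1) j (by lia) ≫ p.f j) := by
      rw [hp]
      exact epi_comp _ _
    epi_of_epi ((mappingCone.inl (𝟙 K)).v (j + 1) j _) _
  have hK (j : ℤ) : Projective (K.X j) := inferInstanceAs (Projective (Projective.over _))
  exact ⟨_, p, HomologicalComplex.epi_of_epi_f _ hp_epi, fun j => Projective.of_iso
    (HomologicalComplex.homotopyCofiber.XIsoBiprod (𝟙 K) j (j + 1) rfl).symm inferInstance⟩

variable [EnoughProjectives A] [HasExt.{e} A]

/-- One syzygy of the whole complex at a time: if `0 ⟶ K ⟶ P ⟶ Y ⟶ 0` is exact and `F ⟶ K` is a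
quasi-isomorphism, the cone of `F ⟶ P` resolves `Y`. -/
lemma exists_quasiIso_of_subsingleton_ext (C : A) (n : ℕ) (Y : CochainComplex A ℤ)
    (hY : ∀ (j : ℤ) (i : ℕ), n < i → Subsingleton (Ext (Y.X j) C i)) :
    ∃ (F : CochainComplex A ℤ) (s : F ⟶ Y), QuasiIso s ∧ ∀ j, cotiltingClass C (F.X j) := by
  induction n generalizing Y with
  | zero => exact ⟨Y, 𝟙 Y, inferInstance, hY⟩
  | succ n ih =>
    obtain ⟨P, p, hp, hP⟩ := exists_epi_of_projective_X Y
    have hPC (j : ℤ) : cotiltingClass C (P.X j) := cotiltingClass_of_projective C _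
    let S := ShortComplex.mk (kernel.ι p) p (kernel.condition p)
    have hS : S.ShortExact := { exact := ShortComplex.exact_kernel p }
    have hSj (j : ℤ) : (S.map (HomologicalComplex.eval _ _ j)).ShortExact := hS.map_of_exact _
    obtain ⟨F, s, hs, hF⟩ := ih S.X₁ fun j i hi =>
      subsingleton_ext_X₁ (hSj j) C i (hPC j i (by lia)) (hY j (i + 1) (by lia))
    let a : mappingCone (s ≫ S.f) ⟶ mappingCone S.f := mappingCone.map _ _ s (𝟙 _) (by simp)
    have ha : QuasiIso a := quasiIso_mappingCone_map _ _ _ _ _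
    have hS_cone := mappingCone.quasiIso_descShortComplex hS
    exact ⟨_, a ≫ mappingCone.descShortComplex S, quasiIso_comp _ _,
      fun j => mappingCone_X _ _ (hF _) (hPC j)⟩

lemma exists_quasiIso_cotiltingClass (C : A) {n : ℕ} [HasInjectiveDimensionLT C n]
    (Y : CochainComplex A ℤ) :
    ∃ (F : CochainComplex A ℤ) (s : F ⟶ Y), QuasiIso s ∧ ∀ j, cotiltingClass C (F.X j) :=
  exists_quasiIso_of_subsingleton_ext C n Y fun _ i hi =>
    HasInjectiveDimensionLT.subsingleton C n i hi.le _

end Resolution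

section HomSingle

open Pretriangulated CochainComplex CochainComplex.HomComplex

/-- The stalk complex `C[i]` as an object of the homotopy category. -/
noncomputable abbrev stalk (C : A) (i : ℤ) : HomotopyCategory A (.up ℤ) :=
  (HomotopyCategory.quotient A (.up ℤ)).obj (((CochainComplex.singleFunctor A 0).obj C)⟦i⟧)

lemma homExactAt_iff_forall_eq_zero {F : CochainComplex A ℤ} {C : A} {i j : ℤ} (hij : j + i = 0) :
    HomExactAt F C j ↔ ∀ f : (HomotopyCategory.quotient A (.up ℤ)).obj F ⟶
      stalk C i, f = 0 := by
  constructor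
  · intro hF f
    obtain ⟨x, rfl⟩ := (CohomologyClass.toHom_bijective _ _ _).surjective f
    obtain ⟨z, rfl⟩ := x.mk_surjective
    obtain ⟨g, hg, rfl⟩ := Cocycle.toSingleMk_surjective z j hij (j - 1) (sub_add_cancel j 1)
    rw [CohomologyClass.toHom_mk_eq_zero_iff,
      Cocycle.toSingleMk_mem_coboundaries_iff g hij _ _ hg _ rfl]
    exact hF (sub_add_cancel j 1) rfl g hg
  · intro hF i' k hi hk g hg
    rw [← Cocycle.toSingleMk_mem_coboundaries_iff g hij _ hi hg _ hk,
      ← CohomologyClass.toHom_mk_eq_zero_iff]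
    exact hF _

end HomSingle

section Triangulated

open Pretriangulated

variable {T : Type*} [Category* T] [HasShift T ℤ]

lemma eq_zero_of_forall_shift_eq_zero [Preadditive T] [∀ n : ℤ, (shiftFunctor T n).Additive]
    {X Y : T} (h : ∀ f : X ⟶ Y⟦(1 : ℤ)⟧, f = 0) (f : X⟦(-1 : ℤ)⟧ ⟶ Y) : f = 0 := by
  apply (shiftFunctor T (1 : ℤ)).map_injective
  rw [← cancel_epi (shiftNegShift X (1 : ℤ)).inv, Functor.map_zero, comp_zero]
  exact h _

lemma bijective_mor₁_comp [HasZeroObject T] [Preadditive T]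
    [∀ n : ℤ, (shiftFunctor T n).Additive] [Pretriangulated T] {t : Triangle T}
    (ht : t ∈ distTriang T) {Y : T} (h₀ : ∀ f : t.obj₃ ⟶ Y, f = 0)
    (h₁ : ∀ f : t.obj₃ ⟶ Y⟦(1 : ℤ)⟧, f = 0) :
    Function.Bijective fun f : t.obj₂ ⟶ Y => t.mor₁ ≫ f := by
  constructor
  · intro f g hfg
    obtain ⟨b, hb⟩ := Triangle.yoneda_exact₂ _ ht (f - g) (by simpa [sub_eq_zero] using hfg)
    rwa [h₀ b, comp_zero, sub_eq_zero] at hb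
  · intro f
    obtain ⟨g, rfl⟩ := Triangle.yoneda_exact₂ _ (inv_rot_of_distTriang _ ht) f
      (eq_zero_of_forall_shift_eq_zero h₁ _)
    exact ⟨g, rfl⟩

end Triangulated

lemma bijective_map_of_forall_exists_bijective_comp {D E : Type*} [Category* D] [Category* E]
    (L : D ⥤ E) (W : MorphismProperty D) [L.IsLocalization W] [W.HasRightCalculusOfFractions]
    {X Y : D} (h : ∀ ⦃X' : D⦄ (s : X' ⟶ X), W s → ∃ (X'' : D) (t : X'' ⟶ X'), W t ∧
      Function.Bijective fun f : X ⟶ Y => (t ≫ s) ≫ f) :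
    Function.Bijective (L.map : (X ⟶ Y) → (L.obj X ⟶ L.obj Y)) := by
  constructor
  · intro f g hfg
    obtain ⟨X', s, hs, hsfg⟩ := (MorphismProperty.map_eq_iff_precomp L W f g).1 hfg
    obtain ⟨X'', t, -, ht⟩ := h s hs
    exact ht.injective (by simp [hsfg])
  · intro g
    obtain ⟨φ, rfl⟩ := Localization.exists_rightFraction L W g
    obtain ⟨X'', t, ht, hbij⟩ := h φ.s φ.hs
    obtain ⟨f, hf⟩ := hbij.surjective (t ≫ φ.f)
    have := Localization.inverts L W t ht
    have := Localization.inverts L W φ.s φ.hs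
    refine ⟨f, ?_⟩
    rw [← cancel_epi (L.map φ.s), φ.map_s_comp_map, ← cancel_epi (L.map t), ← L.map_comp,
      ← L.map_comp, ← L.map_comp, ← assoc]
    exact congrArg L.map hf

section HomDerivedCategory

open CochainComplex

variable [HasExt.{e} A] {C : A}

lemma homExactAt_mappingCone {n : ℕ} [HasInjectiveDimensionLT C n] {F F' : CochainComplex A ℤ}
    (s : F' ⟶ F) [QuasiIso s] (hF : ∀ j, cotiltingClass C (F.X j))
    (hF' : ∀ j, cotiltingClass C (F'.X j)) (j : ℤ) : HomExactAt (mappingCone s) C j :=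
  homExactAt_of_acyclic (n := n) ((acyclic_mappingCone_iff s).2 inferInstance)
    (fun j => mappingCone_X s _ (hF' _) (hF j)) j

/-- `C[i]` is local with respect to the quasi-isomorphisms between complexes with components in
the cotilting class, because their cones stay exact under `Hom(-, C)`. -/
lemma bijective_quotient_map_comp {n : ℕ} [HasInjectiveDimensionLT C n]
    {F F' : CochainComplex A ℤ} (s : F' ⟶ F) [QuasiIso s] (hF : ∀ j, cotiltingClass C (F.X j))
    (hF' : ∀ j, cotiltingClass C (F'.X j)) (i : ℤ) :
    Function.Bijective fun f : (HomotopyCategory.quotient A (.up ℤ)).obj F ⟶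
      stalk C i => (HomotopyCategory.quotient A (.up ℤ)).map s ≫ f := by
  have hcone (i : ℤ) := (homExactAt_iff_forall_eq_zero (neg_add_cancel i)).1
    (homExactAt_mappingCone (n := n) s hF hF' (-i))
  let e : stalk C (i + 1) ≅ (stalk C i)⟦(1 : ℤ)⟧ :=
    (HomotopyCategory.quotient A (.up ℤ)).mapIso
      ((CategoryTheory.shiftFunctorAdd' _ i 1 (i + 1) rfl).app _) ≪≫
      ((HomotopyCategory.quotient A (.up ℤ)).commShiftIso (1 : ℤ)).app _
  refine bijective_mor₁_comp (HomotopyCategory.mappingCone_triangleh_distinguished s) (hcone i)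
    fun f => ?_
  rw [← cancel_mono e.inv, zero_comp]
  exact hcone (i + 1) _

lemma bijective_Qh_map [EnoughProjectives A] [HasDerivedCategory.{w} A] {n : ℕ}
    [HasInjectiveDimensionLT C n] {F : CochainComplex A ℤ} (hF : ∀ j, cotiltingClass C (F.X j))
    (i : ℤ) :
    Function.Bijective (Qh.map : ((HomotopyCategory.quotient A (.up ℤ)).obj F ⟶
      stalk C i) → (Qh.obj _ ⟶ Qh.obj _)) := by
  refine bijective_map_of_forall_exists_bijective_comp Qh (HomotopyCategory.quasiIso A (.up ℤ))
    fun Y s hs => ?_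
  obtain ⟨Y, rfl⟩ := HomotopyCategory.quotient_obj_surjective Y
  obtain ⟨s, rfl⟩ := (HomotopyCategory.quotient A (.up ℤ)).map_surjective s
  have : QuasiIso s := (HomotopyCategory.quotient_map_mem_quasiIso_iff s).1 hs
  obtain ⟨F', t, ht, hF'⟩ := exists_quasiIso_cotiltingClass C (n := n) Y
  refine ⟨_, (HomotopyCategory.quotient A (.up ℤ)).map t,
    (HomotopyCategory.quotient_map_mem_quasiIso_iff t).2 ht, ?_⟩
  rw [← Functor.map_comp]
  exact bijective_quotient_map_comp (n := n) (t ≫ s) hF hF' i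

lemma forall_eq_zero_iff_homExactAt [EnoughProjectives A] [HasDerivedCategory.{w} A] {n : ℕ}
    [HasInjectiveDimensionLT C n] {F : CochainComplex A ℤ} (hF : ∀ j, cotiltingClass C (F.X j))
    {i j : ℤ} (hij : j + i = 0) :
    (∀ f : Q.obj F ⟶ ((DerivedCategory.singleFunctor A 0).obj C)⟦i⟧, f = 0) ↔
      HomExactAt F C j := by
  have hbij := bijective_Qh_map (n := n) hF i
  let e : Qh.obj (stalk C i) ≅ ((DerivedCategory.singleFunctor A 0).obj C)⟦i⟧ :=
    (Q.commShiftIso i).app _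
  rw [homExactAt_iff_forall_eq_zero hij]
  constructor
  · intro h f
    apply hbij.injective
    rw [← cancel_mono e.hom, Functor.map_zero, zero_comp]
    exact h _
  · intro h f
    obtain ⟨g, hg⟩ := hbij.surjective (f ≫ e.inv)
    have hf : f ≫ e.inv = 0 := hg.symm.trans ((congrArg Qh.map (h g)).trans (Qh.map_zero _ _))
    exact (cancel_mono e.inv).1 (hf.trans zero_comp.symm)

end HomDerivedCategory

section NonnegativeDegrees

variable {C : A} {F : CochainComplex A ℤ}

lemma homExactAt_of_prodClass [HasProducts.{v} A] {N : A} (hN : prodClass C N) {j : ℤ}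
    (hF : HomExactAt F C j) : HomExactAt F N j := by
  obtain ⟨ι, s, r, hsr⟩ := hN
  intro i k hij hjk g hg
  choose h hh using fun a : ι => hF hij hjk (g ≫ s ≫ Pi.π _ a) (by simp [reassoc_of% hg])
  have hs : F.d j k ≫ Pi.lift h = g ≫ s := Pi.hom_ext _ _ fun a => by simp [hh]
  exact ⟨Pi.lift h ≫ r, by rw [reassoc_of% hs, hsr, comp_id]⟩

variable [HasExt.{e} A]

lemma homExactAt_X₃ {S : ShortComplex A} (hS : S.ShortExact) {i j : ℤ} (hij : i + 1 = j)
    (h : Subsingleton (Ext (F.X j) S.X₁ 1)) (h₁ : HomExactAt F S.X₁ i)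
    (h₂ : HomExactAt F S.X₂ j) : HomExactAt F S.X₃ j := by
  intro i' k hi' hjk g hg
  obtain rfl : i' = i := by lia
  have := hS.mono_f
  obtain ⟨g₂, rfl⟩ := exists_comp_g_eq hS h g
  let u := hS.exact.lift (F.d i' j ≫ g₂) (by rwa [assoc])
  have hu : u ≫ S.f = F.d i' j ≫ g₂ := hS.exact.lift_f _ _
  obtain ⟨v, hv⟩ := h₁ (sub_add_cancel i' 1) hij u (by simp [← cancel_mono S.f, hu])
  obtain ⟨h', hh'⟩ := h₂ hij hjk (g₂ - v ≫ S.f) (by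
    rw [Preadditive.comp_sub, ← hu, reassoc_of% hv, sub_self])
  exact ⟨h' ≫ S.g, by simp [reassoc_of% hh']⟩

lemma HasFiniteResolution.homExactAt [HasProducts.{v} A] [EnoughProjectives A] {N : A}
    (hN : HasFiniteResolution (prodClass C) N) (hF : ∀ j, cotiltingClass C (F.X j)) {n : ℤ}
    (hFC : ∀ j < n, HomExactAt F C j) : ∀ j < n, HomExactAt F N j := by
  induction hN with
  | of_isZero hN => exact fun j _ _ _ _ _ g _ => ⟨0, hN.eq_of_tgt _ _⟩
  | of_shortExact hS h₁ h₂ ih =>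
    exact fun j hj => homExactAt_X₃ hS (sub_add_cancel j 1) (h₁.subsingleton_ext (hF j) 0)
      (ih _ (by lia)) (homExactAt_of_prodClass h₂ (hFC j hj))

lemma IsBigCotiltingObject.exactAt_of_homExactAt [HasProducts.{v} A] [EnoughProjectives A]
    (hC : IsBigCotiltingObject C) (hF : ∀ j, cotiltingClass C (F.X j)) {n : ℤ}
    (hFC : ∀ j < n, HomExactAt F C j) {j : ℤ} (hj : j < n) : F.ExactAt j := by
  obtain ⟨Q, hQ, hQC⟩ := hC.exists_isCoseparator
  exact Cotilting.exactAt_of_homExactAt hQ (hQC.homExactAt hF hFC j hj)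

lemma cotiltingClass_opcycles (hF : ∀ j, cotiltingClass C (F.X j)) {n : ℤ}
    (hFC : ∀ j < n, HomExactAt F C j) (hexact : ∀ j < n, F.ExactAt j) {j : ℤ} (hj : j ≤ n) :
    cotiltingClass C (F.opcycles j) := by
  suffices h : ∀ (i : ℕ) (j : ℤ), j ≤ n → Subsingleton (Ext (F.opcycles j) C (i + 1)) by
    intro i hi
    obtain ⟨i, rfl⟩ := Nat.exists_eq_add_one.2 hi
    exact h i j hj
  intro i
  induction i with
  | zero =>
    intro j hj
    exact subsingleton_ext_one_X₃ (shortExact_opcycles (sub_add_cancel j 1) (hexact _ (by lia))) C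
      ((homExactAt_iff_fromOpcycles (sub_add_cancel j 1)).1 (hFC _ (by lia))) (hF j 1 one_pos)
  | succ i ih =>
    intro j hj
    exact subsingleton_ext_X₃ (shortExact_opcycles (sub_add_cancel j 1) (hexact _ (by lia))) C _
      (ih _ (by lia)) (hF j _ (by lia))

end NonnegativeDegrees

section Truncation

open ComplexShape

variable (P : ObjectProperty A) [P.IsClosedUnderIsomorphisms]

lemma prop_truncGE'_X {F : CochainComplex A ℤ} (hF : ∀ j, P (F.X j)) (h : P (F.opcycles 0))
    (n : ℕ) : P ((F.truncGE' (embeddingUpIntGE 0)).X n) := by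
  cases n with
  | zero =>
    exact P.prop_of_iso (F.truncGE'XIsoOpcycles (embeddingUpIntGE 0) (by simp)
      (by rw [boundaryGE_embeddingUpIntGE_iff])).symm h
  | succ n =>
    exact P.prop_of_iso (F.truncGE'XIso (embeddingUpIntGE 0) (i := n + 1) (i' := (n + 1 : ℕ))
      (by simp) (by rw [boundaryGE_embeddingUpIntGE_iff]; lia)).symm (hF _)

end Truncation

section Pushout

variable {X₁ X₂ X₃ X₄ : A} {t : X₁ ⟶ X₂} {l : X₁ ⟶ X₃} {r : X₂ ⟶ X₄} {b : X₃ ⟶ X₄}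

lemma mono_of_isPushout_of_mono (h : IsPushout t l r b) [Mono t] : Mono b :=
  MorphismProperty.of_isPushout (P := .monomorphisms A) h.flip ‹_›

lemma exists_lift_of_isPushout_of_mono (h : IsPushout t l r b) [Mono t] {T : A} (x₂ : T ⟶ X₂)
    (x₃ : T ⟶ X₃) (hx : x₂ ≫ r = x₃ ≫ b) : ∃ x₁ : T ⟶ X₁, x₁ ≫ t = x₂ ∧ x₁ ≫ l = x₃ := by
  have := mono_of_isPushout_of_mono h
  have := isIso_cokernel_map_of_isPushout h
  have hx₂ : x₂ ≫ cokernel.π t = 0 := by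
    rw [← cancel_mono (cokernel.map t b l r h.w), assoc, cokernel.π_desc, reassoc_of% hx,
      cokernel.condition, comp_zero, zero_comp]
  obtain ⟨x₁, rfl⟩ : ∃ x₁, x₁ ≫ t = x₂ :=
    ⟨_, (ShortComplex.exact_cokernel t).lift_f x₂ hx₂⟩
  exact ⟨x₁, rfl, by rw [← cancel_mono b, assoc, ← h.w, ← hx, assoc]⟩

lemma prop_of_isPushout_of_mono (P : ObjectProperty A) [P.IsClosedUnderExtensions]
    [P.IsClosedUnderIsomorphisms] (h : IsPushout t l r b) [Mono t] (h₃ : P X₃)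
    (ht : P (cokernel t)) : P X₄ := by
  have := mono_of_isPushout_of_mono h
  have := isIso_cokernel_map_of_isPushout h
  have hS : (ShortComplex.mk b (cokernel.π b) (cokernel.condition b)).ShortExact :=
    { exact := ShortComplex.exact_cokernel b }
  exact P.prop_X₂_of_shortExact hS h₃ (P.prop_of_iso (asIso (cokernel.map _ _ _ _ h.w)) ht)

end Pushout

section Coresolution

/-- A factorization `W_n ⟶ Z ⟶ W_{n+1}` of a differential of `W`: the data needed to replace
`W_0 ⟶ ⋯ ⟶ W_n` by a complex ending in `Z`. -/
structure DifferentialFactorization (W : CochainComplex A ℕ) (n : ℕ) where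
  Z : A
  z : W.X n ⟶ Z
  e : Z ⟶ W.X (n + 1)
  z_e : z ≫ e = W.d n (n + 1)
  e_d : e ≫ W.d (n + 1) (n + 2) = 0

variable {P : A → A} (ι : ∀ Z, Z ⟶ P Z) (W : CochainComplex A ℕ)

/-- The stages of the coresolution of `W` along the maps `ι`: `Z_0 = W_0`, and `Z_{n+1}` is the
pushout of `ι : Z_n ⟶ P Z_n` and `Z_n ⟶ W_{n+1}`. -/
noncomputable def coresolutionStage : ∀ n, DifferentialFactorization W n
  | 0 =>
    { Z := W.X 0
      z := 𝟙 _
      e := W.d 0 1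
      z_e := id_comp _
      e_d := W.d_comp_d _ _ _ }
  | n + 1 =>
    let S := coresolutionStage n
    { Z := pushout (ι S.Z) S.e
      z := pushout.inr _ _
      e := pushout.desc 0 (W.d (n + 1) (n + 2)) (by rw [comp_zero, S.e_d])
      z_e := pushout.inr_desc _ _ _
      e_d := by
        apply pushout.hom_ext
        · rw [pushout.inl_desc_assoc, zero_comp, comp_zero]
        · rw [pushout.inr_desc_assoc, W.d_comp_d, comp_zero] }

/-- The map from the `n`-th term of the coresolution to the next stage. -/
noncomputable def coresolutionStageMap (n : ℕ) :
    P (coresolutionStage ι W n).Z ⟶ (coresolutionStage ι W (n + 1)).Z :=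
  pushout.inl _ _

lemma isPushout_coresolutionStage (n : ℕ) :
    IsPushout (ι (coresolutionStage ι W n).Z) (coresolutionStage ι W n).e
      (coresolutionStageMap ι W n) (coresolutionStage ι W (n + 1)).z :=
  IsPushout.of_hasPushout _ _

lemma coresolutionStageMap_e (n : ℕ) :
    coresolutionStageMap ι W n ≫ (coresolutionStage ι W (n + 1)).e = 0 :=
  pushout.inl_desc _ _ _

/-- The coresolution of `W` by the objects `P Z_n`. -/
noncomputable abbrev coresolution : CochainComplex A ℕ :=
  CochainComplex.of (fun n => P (coresolutionStage ι W n).Z)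
    (fun n => coresolutionStageMap ι W n ≫ ι (coresolutionStage ι W (n + 1)).Z) fun n => by
      rw [assoc, (isPushout_coresolutionStage ι W (n + 1)).w_assoc,
        reassoc_of% coresolutionStageMap_e ι W n, zero_comp]

lemma coresolution_d (n : ℕ) :
    (coresolution ι W).d n (n + 1) =
      coresolutionStageMap ι W n ≫ ι (coresolutionStage ι W (n + 1)).Z :=
  CochainComplex.of_d (fun n => P (coresolutionStage ι W n).Z)
    (fun n => coresolutionStageMap ι W n ≫ ι (coresolutionStage ι W (n + 1)).Z) n

/-- The comparison map from `W` to its coresolution. -/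
noncomputable def toCoresolution : W ⟶ coresolution ι W where
  f n := (coresolutionStage ι W n).z ≫ ι (coresolutionStage ι W n).Z
  comm' n _ h := by
    obtain rfl : n + 1 = _ := h
    rw [coresolution_d, assoc, (isPushout_coresolutionStage ι W n).w_assoc,
      reassoc_of% (coresolutionStage ι W n).z_e]

lemma toCoresolution_f (n : ℕ) :
    (toCoresolution ι W).f n = (coresolutionStage ι W n).z ≫ ι (coresolutionStage ι W n).Z :=
  rfl

/-- `Z_n` is covered by `W_n` and the preceding term of the coresolution. -/
lemma exists_refinement_coresolutionStage {i n : ℕ} (hi : (ComplexShape.up ℕ).prev n = i) {T : A}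
    (t : T ⟶ (coresolutionStage ι W n).Z) :
    ∃ (T' : A) (π : T' ⟶ T) (_ : Epi π) (y : T' ⟶ W.X n) (w : T' ⟶ (coresolution ι W).X i),
      π ≫ t ≫ (coresolutionStage ι W n).e = y ≫ W.d n (n + 1) ∧
      π ≫ t ≫ ι _ = y ≫ (toCoresolution ι W).f n + w ≫ (coresolution ι W).d i n := by
  cases n with
  | zero =>
    refine ⟨T, 𝟙 _, inferInstance, t, 0, id_comp _, ?_⟩
    rw [zero_comp, add_zero, id_comp]
    exact (congrArg (t ≫ ·) (id_comp (ι (W.X 0)))).symm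
  | succ n =>
    obtain rfl : n = i := by rwa [CochainComplex.prev_nat_succ] at hi
    obtain ⟨T', π, hπ, w, y, h⟩ :=
      (isPushout_coresolutionStage ι W n).hom_eq_add_up_to_refinements t
    refine ⟨T', π, hπ, y, w, ?_, ?_⟩
    · rw [reassoc_of% h, Preadditive.add_comp, assoc, assoc, coresolutionStageMap_e, comp_zero,
        zero_add, (coresolutionStage ι W (n + 1)).z_e]
    · rw [reassoc_of% h, Preadditive.add_comp, coresolution_d, toCoresolution_f, assoc, assoc]
      exact add_comm _ _

variable [∀ n, Mono (ι (coresolutionStage ι W n).Z)]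

lemma mono_homologyMap_toCoresolution (n : ℕ) :
    Mono (HomologicalComplex.homologyMap (toCoresolution ι W) n) := by
  cases n with
  | zero =>
    rw [HomologicalComplex.mono_homologyMap_iff_up_to_refinements _ 0 0 1 (by simp) (by simp)]
    intro T x _ y hy
    rw [(coresolution ι W).shape 0 0 (by simp), comp_zero, toCoresolution_f, ← assoc] at hy
    have hxz : x ≫ (coresolutionStage ι W 0).z = 0 := zero_of_comp_mono _ hy
    have hx : x = 0 := (comp_id x).symm.trans hxz
    exact ⟨T, 𝟙 _, inferInstance, 0, by simp [hx]⟩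
  | succ n =>
    rw [HomologicalComplex.mono_homologyMap_iff_up_to_refinements _ n (n + 1) (n + 1 + 1)
      (by simp) (by simp)]
    intro T x _ y hy
    rw [toCoresolution_f, coresolution_d, ← assoc, ← assoc, cancel_mono] at hy
    obtain ⟨t, rfl, rfl⟩ :=
      exists_lift_of_isPushout_of_mono (isPushout_coresolutionStage ι W n) y x hy.symm
    obtain ⟨T', π, hπ, y', w, h, -⟩ := exists_refinement_coresolutionStage ι W rfl t
    exact ⟨T', π, hπ, y', h⟩

lemma epi_homologyMap_toCoresolution (n : ℕ) :
    Epi (HomologicalComplex.homologyMap (toCoresolution ι W) n) := by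
  rw [HomologicalComplex.epi_homologyMap_iff_up_to_refinements _ _ n (n + 1) rfl (by simp)]
  intro T y hy
  rw [coresolution_d, ← assoc] at hy
  obtain ⟨t, rfl, ht⟩ := exists_lift_of_isPushout_of_mono (isPushout_coresolutionStage ι W n) y 0
    ((zero_of_comp_mono _ hy).trans zero_comp.symm)
  obtain ⟨T', π, hπ, x, w, hx, h⟩ := exists_refinement_coresolutionStage ι W rfl t
  exact ⟨T', π, hπ, x, by rw [← hx, ht, comp_zero], w, h⟩

lemma quasiIso_toCoresolution : QuasiIso (toCoresolution ι W) := by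
  rw [quasiIso_iff]
  intro n
  rw [quasiIsoAt_iff_isIso_homologyMap]
  have := mono_homologyMap_toCoresolution ι W n
  have := epi_homologyMap_toCoresolution ι W n
  exact isIso_of_mono_of_epi _

end Coresolution

lemma exists_quasiIso_of_exists_embedding {𝒳 P : ObjectProperty A} [𝒳.IsClosedUnderExtensions]
    [𝒳.IsClosedUnderIsomorphisms]
    (h : ∀ M, 𝒳 M → ∃ (N : A) (j : M ⟶ N), Mono j ∧ P N ∧ 𝒳 (cokernel j))
    {W : CochainComplex A ℕ} (hW : ∀ n, 𝒳 (W.X n)) :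
    ∃ (V : CochainComplex A ℕ) (s : W ⟶ V), QuasiIso s ∧ ∀ n, P (V.X n) := by
  have h' (M : A) : ∃ (N : A) (j : M ⟶ N), 𝒳 M → Mono j ∧ P N ∧ 𝒳 (cokernel j) := by
    by_cases hM : 𝒳 M
    · obtain ⟨N, j, hj⟩ := h M hM
      exact ⟨N, j, fun _ => hj⟩
    · exact ⟨M, 𝟙 M, fun hM' => (hM hM').elim⟩
  choose N ι hι using h'
  have hZ (n : ℕ) : 𝒳 (coresolutionStage ι W n).Z := by
    induction n with
    | zero => exact hW 0
    | succ n ih =>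
      have := (hι _ ih).1
      exact prop_of_isPushout_of_mono 𝒳 (isPushout_coresolutionStage ι W n) (hW _) (hι _ ih).2.2
  have (n : ℕ) := (hι _ (hZ n)).1
  exact ⟨coresolution ι W, toCoresolution ι W, quasiIso_toCoresolution ι W,
    fun n => (hι _ (hZ n)).2.1⟩

section ExactSequences

lemma shortExact_kernelLift {X Y Z : A} {f : X ⟶ Y} {g : Y ⟶ Z} (w : f ≫ g = 0)
    (h : (ShortComplex.mk f g w).Exact) :
    (ShortComplex.mk (kernel.ι f) (kernel.lift g f w)
      (by rw [← cancel_mono (kernel.ι g)]; simp)).ShortExact := by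
  have : Epi (kernel.lift g f w) := (ShortComplex.exact_iff_epi_kernel_lift _).1 h
  refine { exact := ShortComplex.exact_of_f_is_kernel _ ?_ }
  refine KernelFork.IsLimit.ofι' _ _ fun k hk => ?_
  have hkf : k ≫ f = 0 := by simpa using hk =≫ kernel.ι g
  exact ⟨kernel.lift f k hkf, kernel.lift_ι _ _ _⟩

lemma isZero_kernel_of_exact {X Y Z : A} {f : X ⟶ Y} {g : Y ⟶ Z} (w : f ≫ g = 0)
    (h : (ShortComplex.mk f g w).Exact) (hX : IsZero X) : IsZero (kernel g) :=
  have : Epi (kernel.lift g f w) := (ShortComplex.exact_iff_epi_kernel_lift _).1 h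
  hX.of_epi (kernel.lift g f w)

lemma hasInjectiveDimensionLT_of_exact {n : ℕ} {S : ComposableArrows A (n + 3)} (hS : S.Exact)
    (h_first : IsZero (S.obj 0)) (h_last : IsZero (S.obj (Fin.last (n + 3))))
    (hI : ∀ (i : ℕ) (_ : 2 ≤ i) (_ : i ≤ n + 2), Injective (S.obj ⟨i, by lia⟩)) :
    HasInjectiveDimensionLT (S.obj ⟨1, by lia⟩) (n + 1) := by
  have h_kernel (k j : ℕ) (hjk : j + k = n) :
      HasInjectiveDimensionLT (kernel (S.map' (j + 2) (j + 3))) (k + 1) := by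
    induction k generalizing j with
    | zero =>
      obtain rfl : j = n := hjk
      have h_zero : S.map' (j + 2) (j + 3) = 0 := h_last.eq_of_tgt _ _
      have : Injective (S.obj ⟨j + 2, by lia⟩) := hI _ (by lia) le_rfl
      exact hasInjectiveDimensionLT_of_iso
        (kernelZeroIsoSource.symm ≪≫ kernelIsoOfEq h_zero.symm) 1
    | succ k ih =>
      have : Injective (S.obj ⟨j + 2, by lia⟩) := hI _ (by lia) (by lia)
      exact (shortExact_kernelLift _ (hS.exact' (j + 2) (j + 3) (j + 4))).hasInjectiveDimensionLT_X₁
        (k + 1) (ih (j + 1) (by lia)) (hasInjectiveDimensionLT_of_ge _ 1 _ (by lia))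
  have := (isZero_kernel_of_exact _ (hS.exact' 0 1 2) h_first).hasInjectiveDimensionLT_zero
  exact (shortExact_kernelLift _ (hS.exact' 1 2 3)).hasInjectiveDimensionLT_X₂ (n + 1)
    (hasInjectiveDimensionLT_of_ge _ 0 _ n.succ.zero_le) (h_kernel n 0 (zero_add n))

lemma hasFiniteResolution_of_exact {P : ObjectProperty A} {r : ℕ} {S : ComposableArrows A (r + 3)}
    (hS : S.Exact) (h_first : IsZero (S.obj 0)) (h_last : IsZero (S.obj (Fin.last (r + 3))))
    (hP : ∀ (i : ℕ) (_ : 1 ≤ i) (_ : i ≤ r + 1), P (S.obj ⟨i, by lia⟩)) :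
    HasFiniteResolution P (S.obj ⟨r + 2, by lia⟩) := by
  have h_kernel (k : ℕ) (hk : k ≤ r) :
      HasFiniteResolution P (kernel (S.map' (k + 1) (k + 2))) := by
    induction k with
    | zero => exact .of_isZero (isZero_kernel_of_exact _ (hS.exact' 0 1 2) h_first)
    | succ k ih =>
      exact .of_shortExact (shortExact_kernelLift _ (hS.exact' (k + 1) (k + 2) (k + 3)))
        (ih (by lia)) (hP _ (by lia) (by lia))
  have : Epi (S.map' (r + 1) (r + 2)) :=
    (ShortComplex.exact_iff_epi _ (h_last.eq_of_tgt _ _)).1 (hS.exact' (r + 1) (r + 2) (r + 3))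
  exact .of_shortExact
    (S := .mk (kernel.ι (S.map' (r + 1) (r + 2))) (S.map' (r + 1) (r + 2)) (kernel.condition _))
    { exact := ShortComplex.exact_kernel _ } (h_kernel r le_rfl) (hP _ (by lia) le_rfl)

end ExactSequences

lemma isBigCotiltingObject_of_isBigCotilting {R : Type v} [Ring R] [HasExt.{e} (ModuleCat.{v} R)]
    {C : ModuleCat.{v} R} (hC : IsBigCotilting C) : IsBigCotiltingObject C := by
  obtain ⟨n, ⟨S, hS, hS_first, hS_last, ⟨iso⟩, hI⟩, h_ext, h_res⟩ := hC
  obtain ⟨r, T, hT, hT_first, hT_last, hP, -, hQ⟩ := h_res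
  have := hasInjectiveDimensionLT_of_exact hS hS_first hS_last hI
  exact
    { exists_injectiveDimensionLT := ⟨n + 1, hasInjectiveDimensionLT_of_iso iso (n + 1)⟩
      subsingleton_ext_pi := h_ext
      exists_isCoseparator := ⟨_, hQ, hasFiniteResolution_of_exact hT hT_first hT_last hP⟩ }

lemma exists_quasiIso_prodClass [EnoughProjectives A] [HasProducts.{v} A] [HasExt.{e} A] {C : A}
    (hC : IsBigCotiltingObject.{e} C) {F : CochainComplex A ℤ}
    (hF : ∀ j, cotiltingClass.{e} C (F.X j)) (hFC : ∀ j < 0, HomExactAt F C j) :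
    ∃ (Y : CochainComplex A ℤ) (s : F ⟶ Y), QuasiIso s ∧ (∀ i < 0, IsZero (Y.X i)) ∧
      ∀ i, 0 ≤ i → prodClass C (Y.X i) := by
  have h_exact (j : ℤ) (hj : j < 0) : F.ExactAt j := hC.exactAt_of_homExactAt hF hFC hj
  have : F.IsGE 0 := (F.isGE_iff 0).2 h_exact
  obtain ⟨V, t, ht, hV⟩ := exists_quasiIso_of_exists_embedding (fun M hM => hC.exists_embedding hM)
    (prop_truncGE'_X (cotiltingClass C) hF (cotiltingClass_opcycles hF hFC h_exact le_rfl))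
  let t' : F.truncGE 0 ⟶ V.extend (ComplexShape.embeddingUpIntGE 0) :=
    HomologicalComplex.extendMap t _
  have : QuasiIso t' := (HomologicalComplex.quasiIso_extendMap_iff t _).2 ht
  refine ⟨_, F.πTruncGE 0 ≫ t', quasiIso_comp _ _, fun i hi => ?_, fun i hi => ?_⟩
  · exact V.isZero_extend_X _ i fun n hn => by
      simp only [ComplexShape.embeddingUpIntGE_f] at hn
      lia
  · obtain ⟨n, rfl⟩ := Int.eq_ofNat_of_zero_le hi
    exact (prodClass C).prop_of_iso
      (V.extendXIso (ComplexShape.embeddingUpIntGE 0) (by simp)).symm (hV n)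

section DerivedCategory

variable [EnoughProjectives A] [HasExt.{e} A] [HasDerivedCategory.{w} A] {C : A}

lemma eq_zero_of_iso_of_cotiltingClass {n : ℕ} [HasInjectiveDimensionLT C n]
    {X : DerivedCategory A} {Y : CochainComplex A ℤ} (hY₀ : ∀ i < 0, IsZero (Y.X i))
    (hY : ∀ i, 0 ≤ i → cotiltingClass C (Y.X i)) (iso : X ≅ Q.obj Y) {i : ℤ} (hi : 0 < i)
    (f : X ⟶ ((singleFunctor A 0).obj C)⟦i⟧) : f = 0 := by
  have hY' (j : ℤ) : cotiltingClass C (Y.X j) :=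
    (lt_or_ge j 0).elim (fun hj => cotiltingClass_of_isZero C (hY₀ j hj)) (hY j)
  rw [← cancel_epi iso.inv, comp_zero]
  exact (forall_eq_zero_iff_homExactAt (n := n) hY' (neg_add_cancel i)).2
    (homExactAt_of_isZero (hY₀ (-i) (by lia)) C) _

lemma exists_iso_of_forall_eq_zero [HasProducts.{v} A] (hC : IsBigCotiltingObject.{e} C)
    {X : DerivedCategory A}
    (hX : ∀ i : ℤ, 0 < i → ∀ f : X ⟶ ((singleFunctor A 0).obj C)⟦i⟧, f = 0) :
    ∃ Y : CochainComplex A ℤ, (∀ i < 0, IsZero (Y.X i)) ∧ (∀ i, 0 ≤ i → prodClass C (Y.X i)) ∧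
      Nonempty (X ≅ Q.obj Y) := by
  obtain ⟨n, hn⟩ := hC.exists_injectiveDimensionLT
  obtain ⟨F, s, hs, hF⟩ := exists_quasiIso_cotiltingClass C (n := n) (Q.objPreimage X)
  let iso : X ≅ Q.obj F := (Q.objObjPreimageIso X).symm ≪≫ (asIso (Q.map s)).symm
  have hFC (j : ℤ) (hj : j < 0) : HomExactAt F C j := by
    refine (forall_eq_zero_iff_homExactAt (n := n) hF (add_neg_cancel j)).1 fun f => ?_
    rw [← cancel_epi iso.hom, comp_zero]
    exact hX (-j) (by lia) _
  obtain ⟨Y, t, ht, hY₀, hY⟩ := exists_quasiIso_prodClass hC hF hFC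
  exact ⟨Y, hY₀, hY, ⟨iso ≪≫ asIso (Q.map t)⟩⟩

end DerivedCategory

end Cotilting

open Cotilting

theorem statement12_general {A : Type u} [Category.{v} A] [Abelian A] [EnoughProjectives A]
    [HasProducts.{v} A] [HasExt.{e} A] [HasDerivedCategory.{w} A] {C : A}
    (hC : IsBigCotiltingObject.{e} C) (X : DerivedCategory A) :
    List.TFAE
      [∀ i : ℤ, 0 < i → ∀ f : X ⟶ ((singleFunctor A 0).obj C)⟦i⟧, f = 0,
        ∃ Y : CochainComplex A ℤ, (∀ i : ℤ, i < 0 → IsZero (Y.X i)) ∧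
          (∀ i : ℤ, 0 ≤ i → cotiltingClass.{e} C (Y.X i)) ∧ Nonempty (X ≅ Q.obj Y),
        ∃ Y : CochainComplex A ℤ, (∀ i : ℤ, i < 0 → IsZero (Y.X i)) ∧
          (∀ i : ℤ, 0 ≤ i → prodClass C (Y.X i)) ∧ Nonempty (X ≅ Q.obj Y)] := by
  obtain ⟨n, hn⟩ := hC.exists_injectiveDimensionLT
  tfae_have 1 → 3 := exists_iso_of_forall_eq_zero hC
  tfae_have 3 → 2 := fun ⟨Y, hY₀, hY, iso⟩ => ⟨Y, hY₀, fun i hi => hC.prodClass_le _ (hY i hi), iso⟩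
  tfae_have 2 → 1 := fun ⟨Y, hY₀, hY, ⟨iso⟩⟩ _ hi =>
    eq_zero_of_iso_of_cotiltingClass (n := n) hY₀ hY iso hi
  tfae_finish

theorem statement12 (R : Type v) [Ring R] [HasExt.{e} (ModuleCat.{v} R)]
    [HasDerivedCategory.{w} (ModuleCat.{v} R)]
    (C : ModuleCat.{v} R) (hC : IsBigCotilting C)
    (X : DerivedCategory (ModuleCat.{v} R)) :
    ((∀ i : ℤ, 0 < i →
        ∀ f : X ⟶ (((singleFunctor (ModuleCat.{v} R) 0).obj C)⟦i⟧), f = 0) ↔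
      (∃ Y : CochainComplex (ModuleCat.{v} R) ℤ,
        (∀ i : ℤ, i < 0 → IsZero (Y.X i)) ∧
        (∀ i : ℤ, 0 ≤ i → InCotiltingClass C (Y.X i)) ∧
        Nonempty (X ≅ DerivedCategory.Q.obj Y))) ∧
    ((∀ i : ℤ, 0 < i →
        ∀ f : X ⟶ (((singleFunctor (ModuleCat.{v} R) 0).obj C)⟦i⟧), f = 0) ↔
      (∃ Y : CochainComplex (ModuleCat.{v} R) ℤ,
        (∀ i : ℤ, i < 0 → IsZero (Y.X i)) ∧
        (∀ i : ℤ, 0 ≤ i → InProdOf C (Y.X i)) ∧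
        Nonempty (X ≅ DerivedCategory.Q.obj Y))) := by
  have h := statement12_general (isBigCotiltingObject_of_isBigCotilting hC) X
  exact ⟨h.out 0 1, h.out 0 2⟩
end
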